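/- arXiv:math/0410252 — 2 statements merged into one kernel-verified Lean document; each statement's English description precedes it below -/
import Mathlib

section
/- Let Σ ⊂ ℙ²(ℂ) be a finite set and let d ≥ 3 be an integer such that 6·|Σ| ≤ d² + 9d + 16 and such that, for every integer t with 1 ≤ 2t ≤ d + 3 and every nonzero homogeneous polynomial C of degree t in ℂ[x_0,x_1,x_2], at most t(d+3−t) − 2 points of Σ lie on the plane curve {C = 0}. Then for every point P ∈ Σ there exists a homogeneous polynomial of degree d in ℂ[x_0,x_1,x_2] that vanishes at every point of Σ \ {P} and does not vanish at P. -/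
open MvPolynomial

noncomputable section

/-- The projective space `ℙ^N(ℂ)`. -/
abbrev ProjPt (N : ℕ) := Projectivization ℂ (Fin (N + 1) → ℂ)

/-- A (homogeneous) polynomial vanishes at a point of projective space. -/
def VanishesAt {N : ℕ} (F : MvPolynomial (Fin (N + 1)) ℂ) (p : ProjPt N) : Prop :=
  eval p.rep F = 0

/-- Forms of degree `k` in three variables. -/
abbrev FormSp (k : ℕ) : Submodule ℂ (MvPolynomial (Fin 3) ℂ) := homogeneousSubmodule (Fin 3) ℂ k

/-- Evaluation at the points of a finite set. -/
def evMap (T : Finset (ProjPt 2)) : MvPolynomial (Fin 3) ℂ →ₗ[ℂ] (T → ℂ) :=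
  LinearMap.pi fun p => (MvPolynomial.aeval (R := ℂ) p.1.rep).toLinearMap

lemma evMap_apply (T : Finset (ProjPt 2)) (F : MvPolynomial (Fin 3) ℂ) (p : T) :
    evMap T F p = eval p.1.rep F := by
  simp [evMap, MvPolynomial.aeval_eq_eval]

/-- A nowhere zero functional on the points kills all forms of degree `n`. -/
def CBP (n : ℕ) (T : Finset (ProjPt 2)) : Prop :=
  ∃ c : ProjPt 2 → ℂ, (∀ p ∈ T, c p ≠ 0) ∧
    ∀ F : MvPolynomial (Fin 3) ℂ, F.IsHomogeneous n → ∑ p ∈ T, c p * eval p.rep F = 0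

/-- `F` vanishes on `T`. -/
def VanOn (F : MvPolynomial (Fin 3) ℂ) (T : Finset (ProjPt 2)) : Prop :=
  ∀ p ∈ T, eval p.rep F = 0

lemma mem_ker_evMap (T : Finset (ProjPt 2)) (F : MvPolynomial (Fin 3) ℂ) :
    F ∈ LinearMap.ker (evMap T) ↔ VanOn F T := by
  rw [LinearMap.mem_ker, funext_iff]
  simp [evMap_apply, VanOn]

instance formSp_fin (k : ℕ) : FiniteDimensional ℂ (FormSp k) :=
  Module.Finite.of_fg (homogeneousSubmodule_fg (Fin 3) ℂ k)

lemma finrank_formSp (k : ℕ) : 2 * Module.finrank ℂ (FormSp k) = (k + 1) * (k + 2) := by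
  have h1 : Module.finrank ℂ (FormSp k) = (k + 2).choose 2 := by
    unfold FormSp
    rw [homogeneousSubmodule_eq_finsupp_supported]
    have e := (AddMonoidAlgebra.supportedEquivFinsupp (S := ℂ) (R := ℂ)
      {d : Fin 3 →₀ ℕ | d.degree = k}).finrank_eq
    have hs : {d : Fin 3 →₀ ℕ | d.degree = k} =
        ((Finset.finsuppAntidiag (Finset.univ : Finset (Fin 3)) k : Finset (Fin 3 →₀ ℕ)) :
          Set (Fin 3 →₀ ℕ)) := by
      ext d
      simp [Finset.mem_finsuppAntidiag, Finsupp.degree_eq_sum]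
    have hc := Finset.card_finsuppAntidiag_nat_eq_choose (s := (Finset.univ : Finset (Fin 3))) k
    refine e.trans ?_
    rw [hs, Module.finrank_finsupp_self]
    simp only [Finset.coe_sort_coe, Fintype.card_coe]
    rw [hc]
    simp
    rw [← Nat.choose_symm_add]
    congr 1
    omega
  rw [h1, Nat.choose_two_right]
  have : 2 ∣ (k + 2) * (k + 2 - 1) := (Nat.even_mul_pred_self _).two_dvd
  rw [Nat.mul_div_cancel' this]
  simp [mul_comm]

lemma rank_null (T : Finset (ProjPt 2)) (k : ℕ) :
    Module.finrank ℂ ((FormSp k).map (evMap T)) +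
      Module.finrank ℂ (FormSp k ⊓ LinearMap.ker (evMap T) : Submodule ℂ _) =
      Module.finrank ℂ (FormSp k) := by
  have h := LinearMap.finrank_range_add_finrank_ker ((evMap T).domRestrict (FormSp k))
  rw [LinearMap.range_domRestrict] at h
  rw [← h]
  congr 1
  rw [LinearMap.ker_domRestrict]
  rw [← Submodule.map_comap_subtype]
  exact (Submodule.equivMapOfInjective _ (FormSp k).injective_subtype _).finrank_eq.symm

lemma mul_inj {F : MvPolynomial (Fin 3) ℂ} (hF : F ≠ 0) :
    Function.Injective (LinearMap.mulLeft ℂ F) := by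
  intro a b h
  exact mul_left_cancel₀ hF (by simpa using h)

lemma finrank_mul {F : MvPolynomial (Fin 3) ℂ} (hF : F ≠ 0) (k : ℕ) :
    Module.finrank ℂ ((FormSp k).map (LinearMap.mulLeft ℂ F)) = Module.finrank ℂ (FormSp k) :=
  (Submodule.equivMapOfInjective _ (mul_inj hF) (FormSp k)).finrank_eq.symm

/-- The substitution `X i ↦ X i * T`. -/
def gradT : MvPolynomial (Fin 3) ℂ →ₐ[ℂ] Polynomial (MvPolynomial (Fin 3) ℂ) :=
  aeval fun i => Polynomial.C (X i) * Polynomial.X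

lemma gradT_coeff (F : MvPolynomial (Fin 3) ℂ) (k : ℕ) :
    (gradT F).coeff k = homogeneousComponent k F := by
  induction F using MvPolynomial.induction_on' with
  | add p q hp hq => simp [hp, hq]
  | monomial u a =>
    have h : gradT (monomial u a) = Polynomial.monomial u.degree (monomial u a) := by
      rw [gradT, aeval_monomial, Finsupp.prod_fintype _ _ (by simp)]
      simp only [mul_pow, Finset.prod_mul_distrib, ← Polynomial.C_pow]
      rw [Finset.prod_pow_eq_pow_sum, ← map_prod, ← Polynomial.C_mul_X_pow_eq_monomial,
        Finsupp.degree_eq_sum, ← mul_assoc]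
      congr 1
      rw [MvPolynomial.monomial_eq, Finsupp.prod_fintype _ _ (by simp), map_mul]
      rfl
    rw [h, Polynomial.coeff_monomial]
    split_ifs with hk
    · exact (homogeneousComponent_eq_self (isHomogeneous_monomial a hk)).symm
    · have := homogeneousComponent_of_mem (n := u.degree) (m := k)
        ((mem_homogeneousSubmodule _ _).2 (isHomogeneous_monomial a rfl))
      rw [this, if_neg (Ne.symm hk)]

lemma hom_of_coeff {F : MvPolynomial (Fin 3) ℂ} {k : ℕ}
    (h : ∀ i, i ≠ k → (gradT F).coeff i = 0) : F.IsHomogeneous k := by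
  have h2 := sum_homogeneousComponent F
  rw [← h2]
  apply IsHomogeneous.sum
  intro i _
  by_cases hi : i = k
  · subst hi; exact homogeneousComponent_isHomogeneous _ _
  · rw [← gradT_coeff, h i hi]; exact isHomogeneous_zero _ _ _

lemma gradT_hom {F : MvPolynomial (Fin 3) ℂ} {k : ℕ} (h : F.IsHomogeneous k) :
    gradT F = Polynomial.monomial k F := by
  ext1 i
  rw [gradT_coeff, Polynomial.coeff_monomial,
    homogeneousComponent_of_mem ((mem_homogeneousSubmodule _ _).2 h)]
  simp [eq_comm]

lemma factor_hom {A B : MvPolynomial (Fin 3) ℂ} {n : ℕ} (h : (A * B).IsHomogeneous n)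
    (h0 : A * B ≠ 0) : ∃ a b, a + b = n ∧ A.IsHomogeneous a ∧ B.IsHomogeneous b := by
  have h1 := gradT_hom h
  rw [map_mul] at h1
  have hm : gradT A * gradT B ≠ 0 := by
    rw [h1]; simpa using h0
  have hA := left_ne_zero_of_mul hm
  have hB := right_ne_zero_of_mul hm
  have d1 : (gradT A).natDegree + (gradT B).natDegree = n := by
    rw [← Polynomial.natDegree_mul hA hB, h1, Polynomial.natDegree_monomial, if_neg h0]
  have d2 : (gradT A).natTrailingDegree + (gradT B).natTrailingDegree = n := by
    rw [← Polynomial.natTrailingDegree_mul hA hB, h1, Polynomial.natTrailingDegree_monomial h0]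
  have d3 := Polynomial.natTrailingDegree_le_natDegree (gradT A)
  have d4 := Polynomial.natTrailingDegree_le_natDegree (gradT B)
  refine ⟨_, _, d1, hom_of_coeff fun i hi => ?_, hom_of_coeff fun i hi => ?_⟩
  · rcases lt_or_gt_of_ne hi with h | h
    · exact Polynomial.coeff_eq_zero_of_lt_natTrailingDegree (by omega)
    · exact Polynomial.coeff_eq_zero_of_natDegree_lt h
  · rcases lt_or_gt_of_ne hi with h | h
    · exact Polynomial.coeff_eq_zero_of_lt_natTrailingDegree (by omega)
    · exact Polynomial.coeff_eq_zero_of_natDegree_lt h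

lemma cofactor_hom {F A : MvPolynomial (Fin 3) ℂ} {s k : ℕ} (hF : F.IsHomogeneous s)
    (h : (F * A).IsHomogeneous k) (h0 : F * A ≠ 0) : s ≤ k ∧ A.IsHomogeneous (k - s) := by
  obtain ⟨a, b, hab, ha, hb⟩ := factor_hom h h0
  have := ha.inj_right hF (left_ne_zero_of_mul h0)
  subst this
  refine ⟨by omega, ?_⟩
  convert hb using 1
  omega

lemma orth (T : Finset (ProjPt 2)) {n k l : ℕ} (hkl : k + l = n) (h : CBP n T) :
    Module.finrank ℂ ((FormSp k).map (evMap T)) + Module.finrank ℂ ((FormSp l).map (evMap T))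
      ≤ T.card := by
  classical
  obtain ⟨c, hc, hF⟩ := h
  let φ : (T → ℂ) →ₗ[ℂ] Module.Dual ℂ (T → ℂ) :=
    LinearMap.mk₂ ℂ (fun x y => ∑ p : T, c p * (x p * y p))
      (by intros; simp [add_mul, mul_add, Finset.sum_add_distrib])
      (by intros; simp only [smul_eq_mul, Pi.smul_apply, Finset.mul_sum]; exact Finset.sum_congr rfl fun _ _ => by ring)
      (by intros; simp [mul_add, Finset.sum_add_distrib])
      (by intros; simp only [smul_eq_mul, Pi.smul_apply, Finset.mul_sum]; exact Finset.sum_congr rfl fun _ _ => by ring)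
  have hφ : Function.Injective φ := by
    rw [← LinearMap.ker_eq_bot, LinearMap.ker_eq_bot']
    intro x hx
    ext p
    have h1 : ∑ q : T, c q * (x q * (Pi.single p 1 : T → ℂ) q) = 0 :=
      LinearMap.congr_fun hx (Pi.single p 1)
    rw [Finset.sum_eq_single p (by intro q _ hq; simp [hq]) (by simp)] at h1
    have this : c p = 0 ∨ x p = 0 := by simpa using h1
    rcases this with h | h
    · exact absurd h (hc p p.2)
    · simpa using h
  have e1 := Subspace.finrank_add_finrank_dualAnnihilator_eq ((FormSp l).map (evMap T))
  have e2 : Module.finrank ℂ (((FormSp k).map (evMap T)).map φ) =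
      Module.finrank ℂ ((FormSp k).map (evMap T)) :=
    (Submodule.equivMapOfInjective _ hφ _).finrank_eq.symm
  have e3 : ((FormSp k).map (evMap T)).map φ ≤ ((FormSp l).map (evMap T)).dualAnnihilator := by
    rintro _ ⟨_, ⟨A, hA, rfl⟩, rfl⟩
    rw [Submodule.mem_dualAnnihilator]
    rintro _ ⟨B, hB, rfl⟩
    have hAB : (A * B).IsHomogeneous n := by
      rw [← hkl]
      exact IsHomogeneous.mul ((mem_homogeneousSubmodule _ _).1 hA)
        ((mem_homogeneousSubmodule _ _).1 hB)
    have := hF _ hAB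
    rw [← Finset.sum_coe_sort] at this
    simpa [φ, LinearMap.mk₂_apply, evMap_apply] using this
  have e4 := Submodule.finrank_mono e3
  simp at e1
  omega

lemma residualCB {T : Finset (ProjPt 2)} {n e : ℕ} {D : MvPolynomial (Fin 3) ℂ}
    [DecidablePred fun p : ProjPt 2 => eval p.rep D ≠ 0]
    (h : CBP n T) (hD : D.IsHomogeneous e) (he : e ≤ n) :
    CBP (n - e) (T.filter fun p => eval p.rep D ≠ 0) := by
  obtain ⟨c, hc, hF⟩ := h
  refine ⟨fun p => c p * eval p.rep D, ?_, ?_⟩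
  · intro p hp
    rw [Finset.mem_filter] at hp
    exact mul_ne_zero (hc p hp.1) hp.2
  · intro F hFh
    rw [Finset.sum_filter]
    refine Eq.trans ?_ (hF (D * F) (by convert hD.mul hFh using 1; omega))
    apply Finset.sum_congr rfl
    intro p _
    by_cases h : eval p.rep D = 0 <;> simp [h, mul_assoc]

/-- The linear form attached to a functional. -/
def linForm (f : Module.Dual ℂ (Fin 3 → ℂ)) : MvPolynomial (Fin 3) ℂ :=
  ∑ i, C (f (Pi.single i 1)) * X i

lemma linForm_hom (f : Module.Dual ℂ (Fin 3 → ℂ)) : (linForm f).IsHomogeneous 1 :=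
  IsHomogeneous.sum _ _ _ fun i _ => isHomogeneous_C_mul_X _ i

lemma linForm_eval (f : Module.Dual ℂ (Fin 3 → ℂ)) (v : Fin 3 → ℂ) :
    eval v (linForm f) = f v := by
  classical
  conv_rhs => rw [pi_eq_sum_univ' v, map_sum]
  rw [linForm, map_sum]
  apply Finset.sum_congr rfl
  intro i _
  rw [map_smul]
  simp [mul_comm]

lemma exists_line (T : Finset (ProjPt 2)) :
    ∃ L : MvPolynomial (Fin 3) ℂ, L.IsHomogeneous 1 ∧ ∀ p ∈ T, eval p.rep L ≠ 0 := by
  obtain ⟨f, hf⟩ := Module.exists_dual_forall_apply_ne_zero (K := ℂ)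
    (fun p : T => p.1.rep) (fun p => p.1.rep_nonzero)
  exact ⟨linForm f, linForm_hom f, fun p hp => by rw [linForm_eval]; exact hf ⟨p, hp⟩⟩

lemma lower {T : Finset (ProjPt 2)} {n k : ℕ} (h : CBP n T) (hk : k ≤ n) : CBP k T := by
  classical
  obtain ⟨L, hL, hLT⟩ := exists_line T
  have h1 : (L ^ (n - k)).IsHomogeneous (n - k) := by simpa using hL.pow (n - k)
  have := residualCB h h1 (by omega)
  convert this using 1
  · omega
  · symm
    apply Finset.filter_true_of_mem
    intro p hp
    simpa using fun h => absurd h (hLT p hp)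

lemma sep_line (P Q : ProjPt 2) : ∃ L : MvPolynomial (Fin 3) ℂ, L.IsHomogeneous 1 ∧
    eval P.rep L ≠ 0 ∧ (Q ≠ P → eval Q.rep L = 0) := by
  by_cases hPQ : Q = P
  · obtain ⟨L, h1, h2⟩ := exists_line {P}
    exact ⟨L, h1, h2 P (by simp), fun h => absurd hPQ h⟩
  · have : P.rep ∉ Submodule.span ℂ {Q.rep} := by
      intro h
      rw [Submodule.mem_span_singleton] at h
      obtain ⟨a, ha⟩ := h
      apply hPQ
      rw [← P.mk_rep, ← Q.mk_rep]
      symm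
      rw [Projectivization.mk_eq_mk_iff']
      exact ⟨a, ha⟩
    obtain ⟨f, hf, hf2⟩ := Submodule.exists_le_ker_of_notMem this
    refine ⟨linForm f, linForm_hom f, by rw [linForm_eval]; exact hf, fun _ => ?_⟩
    rw [linForm_eval]
    exact hf2 (Submodule.mem_span_singleton_self _)

lemma sep_point (T : Finset (ProjPt 2)) (P : ProjPt 2) {n : ℕ} (hn : T.card ≤ n) :
    ∃ F : MvPolynomial (Fin 3) ℂ, F.IsHomogeneous n ∧
    eval P.rep F = 1 ∧ ∀ Q ∈ T, Q ≠ P → eval Q.rep F = 0 := by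
  choose L h1 h2 h3 using sep_line P
  set F := (∏ Q ∈ T, L Q) * (L P) ^ (n - T.card) with hFd
  have hF : F.IsHomogeneous n := by
    have e1 : (∏ Q ∈ T, L Q).IsHomogeneous T.card := by
      simpa using IsHomogeneous.prod T L (fun _ => 1) fun i _ => h1 i
    have e2 : ((L P) ^ (n - T.card)).IsHomogeneous (n - T.card) := by
      simpa using (h1 P).pow (n - T.card)
    convert e1.mul e2 using 1
    omega
  have hP : eval P.rep F ≠ 0 := by
    rw [hFd, map_mul, map_prod, map_pow]
    exact mul_ne_zero (Finset.prod_ne_zero_iff.2 fun i _ => h2 i) (pow_ne_zero _ (h2 P))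
  refine ⟨C (eval P.rep F)⁻¹ * F, hF.C_mul _, by simp [hP], ?_⟩
  intro Q hQ hQP
  have : eval Q.rep F = 0 := by
    rw [hFd, map_mul, map_prod, Finset.prod_eq_zero hQ (h3 Q hQP), zero_mul]
  simp [this]

lemma evMap_surj (T : Finset (ProjPt 2)) {n : ℕ} (hn : T.card ≤ n) :
    Module.finrank ℂ ((FormSp n).map (evMap T)) = T.card := by
  have : (FormSp n).map (evMap T) = ⊤ := by
    rw [eq_top_iff]
    intro x _
    choose F h1 h2 h3 using fun P => sep_point T P hn
    refine ⟨∑ p : T, C (x p) * F p, ?_, ?_⟩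
    · exact (mem_homogeneousSubmodule _ _).2
        (IsHomogeneous.sum _ _ _ fun i _ => (h1 i).C_mul _)
    · ext q
      rw [evMap_apply, map_sum, Finset.sum_eq_single q]
      · simp [h2]
      · intro b _ hb
        rw [map_mul, h3 b q q.2 (fun h => hb (Subtype.ext h.symm)), mul_zero]
      · simp
  rw [this]
  simp

lemma bezout (T : Finset (ProjPt 2)) {F G : MvPolynomial (Fin 3) ℂ} {a b : ℕ}
    (hF0 : F ≠ 0) (hG0 : G ≠ 0) (hF : F.IsHomogeneous a) (hG : G.IsHomogeneous b)
    (hFT : VanOn F T) (hGT : VanOn G T) (hrel : IsRelPrime F G) : T.card ≤ a * b := by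
  obtain ⟨m, hm⟩ : ∃ m, m = T.card := ⟨_, rfl⟩
  have h1 := evMap_surj T (n := m + a + b) (by omega)
  have h2 := rank_null T (m + a + b)
  have h3 := finrank_mul hF0 (m + b)
  have h4 := finrank_mul hG0 (m + a)
  have h5 := finrank_mul (mul_ne_zero hF0 hG0) m
  set A := (FormSp (m + b)).map (LinearMap.mulLeft ℂ F)
  set B := (FormSp (m + a)).map (LinearMap.mulLeft ℂ G)
  have h6 := Submodule.finrank_sup_add_finrank_inf_eq A B
  have h7 : A ⊔ B ≤ FormSp (m + a + b) ⊓ LinearMap.ker (evMap T) := by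
    apply sup_le
    · rintro _ ⟨H, hH, rfl⟩
      refine ⟨?_, ?_⟩
      · have := hF.mul ((mem_homogeneousSubmodule _ _).1 hH)
        rw [show a + (m + b) = m + a + b by omega] at this
        exact (mem_homogeneousSubmodule _ _).2 this
      · rw [SetLike.mem_coe, mem_ker_evMap]
        intro p hp
        simp [hFT p hp]
    · rintro _ ⟨H, hH, rfl⟩
      refine ⟨?_, ?_⟩
      · have := hG.mul ((mem_homogeneousSubmodule _ _).1 hH)
        rw [show b + (m + a) = m + a + b by omega] at this
        exact (mem_homogeneousSubmodule _ _).2 this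
      · rw [SetLike.mem_coe, mem_ker_evMap]
        intro p hp
        simp [hGT p hp]
  have h8 : A ⊓ B ≤ (FormSp m).map (LinearMap.mulLeft ℂ (F * G)) := by
    rintro _ ⟨⟨H, hH, rfl⟩, ⟨K, hK, hHK⟩⟩
    simp only [LinearMap.mulLeft_apply] at hHK ⊢
    by_cases hH0 : H = 0
    · subst hH0; simp
    obtain ⟨M, rfl⟩ : G ∣ H := by
      exact hrel.symm.dvd_of_dvd_mul_left ⟨K, hHK.symm⟩
    have := cofactor_hom hG ((mem_homogeneousSubmodule _ _).1 hH) hH0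
    refine ⟨M, (mem_homogeneousSubmodule _ _).2 ?_, by simp⟩
    simpa using this.2
  have : FiniteDimensional ℂ (FormSp (m + a + b) ⊓ LinearMap.ker (evMap T) : Submodule ℂ _) :=
    Submodule.finiteDimensional_inf_left _ _
  have h9 := Submodule.finrank_mono h7
  have h10 := Submodule.finrank_mono h8
  have r1 := finrank_formSp (m + a + b)
  have r2 := finrank_formSp (m + b)
  have r3 := finrank_formSp (m + a)
  have r4 := finrank_formSp m
  nlinarith

lemma rank_of_inj (T : Finset (ProjPt 2)) {k : ℕ}
    (h : ∀ G : MvPolynomial (Fin 3) ℂ, G.IsHomogeneous k → VanOn G T → G = 0) :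
    Module.finrank ℂ ((FormSp k).map (evMap T)) = Module.finrank ℂ (FormSp k) := by
  have h1 := rank_null T k
  have h2 : FormSp k ⊓ LinearMap.ker (evMap T) = ⊥ := by
    rw [eq_bot_iff]
    rintro G ⟨hG, hG2⟩
    rw [SetLike.mem_coe, mem_ker_evMap] at hG2
    exact (Submodule.mem_bot _).2 (h G ((mem_homogeneousSubmodule _ _).1 hG) hG2)
  rw [h2, finrank_bot] at h1
  exact h1

lemma rank_of_mul (T : Finset (ProjPt 2)) {k s : ℕ} {F : MvPolynomial (Fin 3) ℂ} (hF0 : F ≠ 0)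
    (hF : F.IsHomogeneous s)
    (h : ∀ G : MvPolynomial (Fin 3) ℂ, G.IsHomogeneous k → VanOn G T → F ∣ G) :
    Module.finrank ℂ (FormSp k) ≤
    Module.finrank ℂ ((FormSp k).map (evMap T)) + Module.finrank ℂ (FormSp (k - s)) := by
  have h1 := rank_null T k
  have h2 : FormSp k ⊓ LinearMap.ker (evMap T) ≤
      (FormSp (k - s)).map (LinearMap.mulLeft ℂ F) := by
    rintro G ⟨hG, hG2⟩
    rw [SetLike.mem_coe, mem_ker_evMap] at hG2
    have hG3 := (mem_homogeneousSubmodule _ _).1 hG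
    obtain ⟨M, rfl⟩ := h G hG3 hG2
    by_cases h0 : F * M = 0
    · rw [h0]; exact Submodule.zero_mem _
    · exact ⟨M, (mem_homogeneousSubmodule _ _).2 (cofactor_hom hF hG3 h0).2, by simp⟩
  have h3 := Submodule.finrank_mono h2
  rw [finrank_mul hF0] at h3
  omega

/-- No nonzero form of degree less than `s` vanishes on `T`. -/
def MinDeg (s : ℕ) (T : Finset (ProjPt 2)) : Prop :=
  ∀ t < s, ∀ H : MvPolynomial (Fin 3) ℂ, H.IsHomogeneous t → VanOn H T → H = 0

lemma exists_min {T : Finset (ProjPt 2)} {F : MvPolynomial (Fin 3) ℂ} {k : ℕ} (hF0 : F ≠ 0)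
    (hF : F.IsHomogeneous k) (hT : VanOn F T) :
    ∃ s ≤ k, MinDeg s T ∧ ∃ H : MvPolynomial (Fin 3) ℂ, H ≠ 0 ∧ H.IsHomogeneous s ∧ VanOn H T := by
  classical
  have hex : ∃ s, ∃ H : MvPolynomial (Fin 3) ℂ, H ≠ 0 ∧ H.IsHomogeneous s ∧ VanOn H T :=
    ⟨k, F, hF0, hF, hT⟩
  refine ⟨Nat.find hex, Nat.find_min' hex ⟨F, hF0, hF, hT⟩, ?_, Nat.find_spec hex⟩
  intro t ht H hH hHT
  by_contra h0
  exact Nat.find_min hex ht ⟨H, h0, hH, hHT⟩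

lemma not_unit_of_van {T : Finset (ProjPt 2)} (hT : T.Nonempty) {F : MvPolynomial (Fin 3) ℂ}
    (hF : VanOn F T) : ¬ IsUnit F := by
  intro h
  obtain ⟨p, hp⟩ := hT
  have := h.map (eval p.rep)
  rw [hF p hp] at this
  exact not_isUnit_zero this

lemma unit_of_hom_zero {F : MvPolynomial (Fin 3) ℂ} (hF0 : F ≠ 0) (hF : F.IsHomogeneous 0) :
    IsUnit F := by
  have h1 := (totalDegree_zero_iff_isHomogeneous (Fin 3)).2 hF
  rw [totalDegree_eq_zero_iff_eq_C] at h1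
  have h2 : coeff 0 F ≠ 0 := fun h => hF0 (by rw [h1, h, map_zero])
  rw [h1]
  exact (isUnit_iff_ne_zero.2 h2).map C

lemma pos_of_van {T : Finset (ProjPt 2)} (hT : T.Nonempty) {F : MvPolynomial (Fin 3) ℂ} {s : ℕ}
    (hF0 : F ≠ 0) (hFs : F.IsHomogeneous s) (hF : VanOn F T) : 1 ≤ s := by
  by_contra h
  have : s = 0 := by omega
  subst this
  exact not_unit_of_van hT hF (unit_of_hom_zero hF0 hFs)

lemma main_claim (n : ℕ) : ∀ (T : Finset (ProjPt 2)), T.Nonempty → CBP n T →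
    ∀ (s : ℕ) (F : MvPolynomial (Fin 3) ℂ), F ≠ 0 → F.IsHomogeneous s → VanOn F T →
    MinDeg s T → ∀ (j : ℕ) (G : MvPolynomial (Fin 3) ℂ), G.IsHomogeneous j → VanOn G T →
    s + j ≤ n + 1 → F ∣ G := by
  classical
  induction n using Nat.strong_induction_on with
  | _ n ihn =>
  intro T hT hCB s F hF0 hF hFT hmin j
  induction j using Nat.strong_induction_on with
  | _ j ihj =>
  intro G hG hGT hsj
  by_contra hdvd
  have hG0 : G ≠ 0 := fun h => hdvd (h ▸ dvd_zero F)
  have hs := pos_of_van hT hF0 hF hFT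
  have hjs : s ≤ j := by
    by_contra h
    exact hG0 (hmin j (by omega) G hG hGT)
  obtain ⟨F', G', D, hrel, rfl, rfl⟩ := UniqueFactorizationMonoid.exists_reduced_factors F hF0 G
  obtain ⟨e, s', hs', hD, hF'⟩ := factor_hom hF hF0
  obtain ⟨hej, hG'⟩ := cofactor_hom hD hG hG0
  have hD0 := left_ne_zero_of_mul hF0
  have hF'0 := right_ne_zero_of_mul hF0
  have hG'0 := right_ne_zero_of_mul hG0
  rcases Nat.eq_zero_or_pos e with he | he
  · -- coprime case
    subst he
    have hDu : IsUnit D := unit_of_hom_zero hD0 hD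
    have hrel2 : IsRelPrime (D * F') (D * G') :=
      (isRelPrime_mul_unit_left hDu).2 hrel
    have hbez := bezout T hF0 hG0 hF hG hFT hGT hrel2
    have hCB2 : CBP (s + j - 2) T := lower hCB (by omega)
    have ho := orth T (k := s - 1) (l := j - 1) (by omega) hCB2
    have r1 := rank_of_inj T (k := s - 1) (hmin _ (by omega))
    have f1 := finrank_formSp (s - 1)
    have f2 := finrank_formSp (j - 1)
    obtain ⟨a, rfl⟩ : ∃ a, s = a + 1 := ⟨s - 1, by omega⟩
    rcases Nat.eq_or_lt_of_le hjs with h | h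
    · subst h
      simp only [Nat.add_sub_cancel] at *
      rw [r1] at ho
      nlinarith
    · have r2 := rank_of_mul T (k := j - 1) hF0 hF (fun H hH hHT =>
        ihj (j - 1) (by omega) H hH hHT (by omega))
      have f3 := finrank_formSp (j - 1 - (a + 1))
      obtain ⟨b, rfl⟩ : ∃ b, j = a + 1 + 1 + b := ⟨j - (a + 1 + 1), by omega⟩
      rw [show a + 1 + 1 + b - 1 - (a + 1) = b by omega] at *
      rw [show a + 1 + 1 + b - 1 = a + 1 + b by omega] at *
      rw [show a + 1 - 1 = a by omega] at *
      rw [r1] at ho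
      nlinarith
  · -- common factor: pass to the residual set
    set T' := T.filter fun p => eval p.rep D ≠ 0 with hT'
    have hes : e < s := by
      rcases Nat.eq_zero_or_pos s' with h | h
      · exfalso
        subst h
        apply hdvd
        have hu : IsUnit F' := unit_of_hom_zero hF'0 hF'
        exact mul_dvd_mul_left D hu.dvd
      · omega
    have hT'n : T'.Nonempty := by
      by_contra h
      rw [Finset.not_nonempty_iff_eq_empty, hT', Finset.filter_eq_empty_iff] at h
      exact hD0 (hmin e hes D hD fun p hp => by simpa using h hp)
    have hCB' : CBP (n - e) T' := residualCB hCB hD (by omega)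
    have hF'T : VanOn F' T' := by
      intro p hp
      rw [hT', Finset.mem_filter] at hp
      have := hFT p hp.1
      rw [map_mul] at this
      exact (mul_eq_zero.1 this).resolve_left hp.2
    have hG'T : VanOn G' T' := by
      intro p hp
      rw [hT', Finset.mem_filter] at hp
      have := hGT p hp.1
      rw [map_mul] at this
      exact (mul_eq_zero.1 this).resolve_left hp.2
    obtain ⟨u, hu, hmin', H, hH0, hH, hHT⟩ := exists_min hF'0 hF' hF'T
    have d1 := ihn (n - e) (by omega) T' hT'n hCB' u H hH0 hH hHT hmin' s' F' hF' hF'T (by omega)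
    have d2 := ihn (n - e) (by omega) T' hT'n hCB' u H hH0 hH hHT hmin' (j - e) G' hG' hG'T
      (by omega)
    exact not_unit_of_van hT'n hHT (hrel d1 d2)

lemma exists_low_curve {T : Finset (ProjPt 2)} {d : ℕ} (hd : 3 ≤ d) (hCB : CBP d T)
    (hcard : 6 * T.card ≤ d ^ 2 + 9 * d + 16) :
    ∃ (k : ℕ) (F : MvPolynomial (Fin 3) ℂ), 2 * k ≤ d + 1 ∧ F ≠ 0 ∧ F.IsHomogeneous k ∧
      VanOn F T := by
  by_contra hcon
  push Not at hcon
  have key : ∀ k, 2 * k ≤ d + 1 → Module.finrank ℂ ((FormSp k).map (evMap T)) =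
      Module.finrank ℂ (FormSp k) := by
    intro k hk
    apply rank_of_inj
    intro G hG hGT
    by_contra h0
    exact hcon k G hk h0 hG hGT
  rcases Nat.even_or_odd' d with ⟨k, rfl | rfl⟩
  · have ho := orth T (k := k) (l := k) (by omega) hCB
    rw [key k (by omega)] at ho
    have f1 := finrank_formSp k
    have : 2 ≤ k := by omega
    nlinarith
  · have ho := orth T (k := k) (l := k + 1) (by omega) hCB
    rw [key k (by omega), key (k + 1) (by omega)] at ho
    have f1 := finrank_formSp k
    have f2 := finrank_formSp (k + 1)
    have : 1 ≤ k := by omega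
    nlinarith

lemma final_curve {T : Finset (ProjPt 2)} (hT : T.Nonempty) {d : ℕ} (hd : 3 ≤ d) (hCB : CBP d T)
    (hcard : 6 * T.card ≤ d ^ 2 + 9 * d + 16) :
    ∃ (s : ℕ) (F : MvPolynomial (Fin 3) ℂ), 1 ≤ s ∧ 2 * s ≤ d + 1 ∧ F ≠ 0 ∧ F.IsHomogeneous s ∧
      VanOn F T ∧ s * (d + 3 - s) ≤ T.card := by
  obtain ⟨k, F0, hk, h0, h1, h2⟩ := exists_low_curve hd hCB hcard
  obtain ⟨s, hsk, hmin, F, hF0, hF, hFT⟩ := exists_min h0 h1 h2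
  have hs := pos_of_van hT hF0 hF hFT
  refine ⟨s, F, hs, by omega, hF0, hF, hFT, ?_⟩
  have ho := orth T (k := s - 1) (l := d + 1 - s) (by omega) hCB
  rw [rank_of_inj T (k := s - 1) (hmin _ (by omega))] at ho
  have r2 := rank_of_mul T (k := d + 1 - s) hF0 hF (fun H hH hHT =>
    main_claim d T hT hCB s F hF0 hF hFT hmin _ H hH hHT (by omega))
  have f1 := finrank_formSp (s - 1)
  have f2 := finrank_formSp (d + 1 - s)
  have f3 := finrank_formSp (d + 1 - s - s)
  obtain ⟨a, rfl⟩ : ∃ a, s = a + 1 := ⟨s - 1, by omega⟩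
  obtain ⟨b, hb⟩ : ∃ b, d = 2 * a + 1 + b := ⟨d - (2 * a + 1), by omega⟩
  subst hb
  rw [show 2 * a + 1 + b + 1 - (a + 1) - (a + 1) = b by omega] at *
  rw [show 2 * a + 1 + b + 1 - (a + 1) = a + 1 + b by omega] at *
  rw [show a + 1 - 1 = a by omega] at *
  rw [show 2 * a + 1 + b + 3 - (a + 1) = a + b + 3 by omega] at *
  nlinarith

theorem stmt_1 (S : Set (ProjPt 2)) (hfin : S.Finite) (d : ℕ) (hd : 3 ≤ d)
    (hcard : 6 * S.ncard ≤ d ^ 2 + 9 * d + 16)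
    (hcurve : ∀ t : ℕ, 1 ≤ t → 2 * t ≤ d + 3 →
      ∀ C : MvPolynomial (Fin 3) ℂ, C ≠ 0 → C.IsHomogeneous t →
        ((S ∩ {p : ProjPt 2 | VanishesAt C p}).ncard : ℤ)
          ≤ (t : ℤ) * ((d : ℤ) + 3 - (t : ℤ)) - 2) :
    ∀ P ∈ S, ∃ F : MvPolynomial (Fin 3) ℂ, F.IsHomogeneous d ∧
      (∀ Q ∈ S, Q ≠ P → VanishesAt F Q) ∧ ¬ VanishesAt F P := by
  classical
  intro P hP
  by_contra hcon
  set T0 : Finset (ProjPt 2) := hfin.toFinset with hT0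
  have hP0 : P ∈ T0 := by simpa [hT0] using hP
  have hnot : (Pi.single ⟨P, hP0⟩ 1 : T0 → ℂ) ∉ (FormSp d).map (evMap T0) := by
    rintro ⟨F, hF, hFe⟩
    apply hcon
    refine ⟨F, (mem_homogeneousSubmodule _ _).1 hF, ?_, ?_⟩
    · intro Q hQ hQP
      have hQ0 : Q ∈ T0 := by simpa [hT0] using hQ
      have := congrFun hFe ⟨Q, hQ0⟩
      rw [evMap_apply] at this
      rw [VanishesAt, this, Pi.single_eq_of_ne]
      intro h
      exact hQP (congrArg Subtype.val h)
    · have := congrFun hFe ⟨P, hP0⟩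
      rw [evMap_apply, Pi.single_eq_same] at this
      rw [VanishesAt, this]
      exact one_ne_zero
  obtain ⟨f, hf, hf2⟩ := Submodule.exists_le_ker_of_notMem hnot
  set c : ProjPt 2 → ℂ := fun p => if h : p ∈ T0 then f (Pi.single ⟨p, h⟩ 1) else 0 with hc
  set T := T0.filter fun p => c p ≠ 0 with hTd
  have hPT : P ∈ T := by
    rw [hTd, Finset.mem_filter]
    refine ⟨hP0, ?_⟩
    rw [hc]
    simpa [hP0] using hf
  have hCB : CBP d T := by
    refine ⟨c, fun p hp => (Finset.mem_filter.1 hp).2, ?_⟩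
    intro F hF
    have h1 : f (evMap T0 F) = 0 := hf2 ⟨F, (mem_homogeneousSubmodule _ _).2 hF, rfl⟩
    rw [pi_eq_sum_univ' (evMap T0 F), map_sum] at h1
    rw [hTd, Finset.sum_filter]
    refine Eq.trans ?_ h1
    rw [← Finset.sum_coe_sort]
    apply Finset.sum_congr rfl
    intro p _
    rw [map_smul, evMap_apply, smul_eq_mul]
    have hcp : c p = f (Pi.single p 1) := by simp [hc]
    rw [← hcp]
    by_cases h : c p = 0 <;> simp [h, mul_comm]
  have hTS : (T : Set (ProjPt 2)) ⊆ S := by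
    intro p hp
    have := (Finset.mem_filter.1 (Finset.mem_coe.1 hp)).1
    simpa [hT0] using this
  have hle : T.card ≤ S.ncard := by
    rw [← Set.ncard_coe_finset]
    exact Set.ncard_le_ncard hTS hfin
  obtain ⟨s, F, hs, hsd, hF0, hF, hFT, hbig⟩ := final_curve ⟨P, hPT⟩ hd hCB (by omega)
  have h1 := hcurve s hs (by omega) F hF0 hF
  have h2 : T.card ≤ (S ∩ {p : ProjPt 2 | VanishesAt F p}).ncard := by
    rw [← Set.ncard_coe_finset]
    exact Set.ncard_le_ncard (fun p hp => ⟨hTS hp, hFT p hp⟩) (hfin.inter_of_left _)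
  have h3 : (s : ℤ) * ((d : ℤ) + 3 - s) ≤ T.card := by
    have : ((d + 3 - s : ℕ) : ℤ) = (d : ℤ) + 3 - s := by omega
    rw [← this]
    exact_mod_cast hbig
  have h4 : (T.card : ℤ) ≤ ((S ∩ {p : ProjPt 2 | VanishesAt F p}).ncard : ℤ) := by
    exact_mod_cast h2
  linarith
end
end

section
/- Let P_1,…,P_s be distinct points of ℙ²(ℂ) and let d ≥ 3 be an integer such that s ≤ max{⌊(d+3)/2⌋·(d+3−⌊(d+3)/2⌋) − 1, ⌊(d+3)/2⌋²} and such that, for every integer t with 1 ≤ 2t ≤ d + 3 and every nonzero homogeneous polynomial C of degree t in ℂ[x_0,x_1,x_2], at most t(d+3−t) − 2 of the points P_1,…,P_s lie on the plane curve {C = 0}. Then for every point Q ∈ ℙ²(ℂ) \ {P_1,…,P_s} there exists a homogeneous polynomial of degree d in ℂ[x_0,x_1,x_2] vanishing at each of P_1,…,P_s and not vanishing at Q. -/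
open MvPolynomial

noncomputable section

/-- The grading substitution `X i ↦ X i * T`. -/
def gradMap {σ : Type*} : MvPolynomial σ ℂ →ₐ[ℂ] Polynomial (MvPolynomial σ ℂ) :=
  aeval (fun i => Polynomial.C (X i) * Polynomial.X)

lemma gradMap_coeff {σ : Type*} (p : MvPolynomial σ ℂ) (k : ℕ) :
    (gradMap p).coeff k = homogeneousComponent k p := by
  induction p using MvPolynomial.induction_on' with
  | monomial u a =>
    have h : gradMap (monomial u a) =
        Polynomial.C (monomial u a) * Polynomial.X ^ u.degree := by
      simp only [gradMap, aeval_monomial, mul_pow, Finsupp.prod, Finset.prod_mul_distrib,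
        Finset.prod_pow_eq_pow_sum]
      rw [monomial_eq, Finsupp.prod]
      simp only [map_mul, map_prod, map_pow, Finsupp.degree_apply]
      rw [← mul_assoc]
      congr 1
    rw [h, Polynomial.coeff_C_mul_X_pow]
    split_ifs with hk
    · rw [homogeneousComponent_eq_self]
      exact isHomogeneous_monomial _ hk.symm
    · rw [homogeneousComponent_of_mem (isHomogeneous_monomial a rfl), if_neg hk]
  | add p q hp hq => simp [hp, hq]

lemma gradMap_of_hom {σ : Type*} {p : MvPolynomial σ ℂ} {n : ℕ} (hp : p.IsHomogeneous n) :
    gradMap p = Polynomial.C p * Polynomial.X ^ n := by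
  ext1 k
  rw [gradMap_coeff, Polynomial.coeff_C_mul_X_pow, homogeneousComponent_of_mem hp]

lemma gradMap_inj {σ : Type*} {p : MvPolynomial σ ℂ} (hp : p ≠ 0) : gradMap p ≠ 0 := by
  intro h
  apply hp
  rw [← sum_homogeneousComponent p]
  apply Finset.sum_eq_zero
  intro i _
  rw [← gradMap_coeff, h, Polynomial.coeff_zero]

lemma natDegree_eq_trailing {R : Type*} [CommRing R] [IsDomain R] {P Q : Polynomial R} {c : R}
    {n : ℕ} (hc : c ≠ 0) (h1 : P * Q = Polynomial.C c * Polynomial.X ^ n) :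
    P.natTrailingDegree = P.natDegree := by
  have hPQ : P * Q ≠ 0 := by
    rw [h1]; exact mul_ne_zero (by simpa using hc) (pow_ne_zero _ Polynomial.X_ne_zero)
  have hp' := left_ne_zero_of_mul hPQ
  have hq' := right_ne_zero_of_mul hPQ
  have d1 := Polynomial.natDegree_mul hp' hq'
  have d2 := Polynomial.natTrailingDegree_mul hp' hq'
  rw [h1] at d1 d2
  rw [Polynomial.natDegree_C_mul_X_pow _ _ hc] at d1
  rw [Polynomial.C_mul_X_pow_eq_monomial, Polynomial.natTrailingDegree_monomial hc] at d2
  have e1 := Polynomial.natTrailingDegree_le_natDegree P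
  have e2 := Polynomial.natTrailingDegree_le_natDegree Q
  omega

/-- Factors of a nonzero homogeneous polynomial are homogeneous. -/
lemma hom_of_mul {σ : Type*} {p q : MvPolynomial σ ℂ} {n : ℕ} (h : (p * q).IsHomogeneous n)
    (hp : p ≠ 0) (hq : q ≠ 0) : ∃ k, p.IsHomogeneous k := by
  have h1 := gradMap_of_hom h
  rw [map_mul] at h1
  have e := natDegree_eq_trailing (mul_ne_zero hp hq) h1
  refine ⟨(gradMap p).natDegree, ?_⟩
  have : homogeneousComponent (gradMap p).natDegree p = p := by
    conv_rhs => rw [← sum_homogeneousComponent p]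
    symm
    apply Finset.sum_eq_single
    · intro b _ hb
      rw [← gradMap_coeff]
      rcases lt_or_gt_of_ne hb with hb | hb
      · exact Polynomial.coeff_eq_zero_of_lt_natTrailingDegree (hb.trans_eq e.symm)
      · exact Polynomial.coeff_eq_zero_of_natDegree_lt hb
    · intro hb
      apply homogeneousComponent_eq_zero
      simpa using hb
  have h2 := homogeneousComponent_isHomogeneous (gradMap p).natDegree p
  rw [this] at h2
  exact h2

lemma hom_of_mul' {σ : Type*} {p q : MvPolynomial σ ℂ} {n : ℕ} (h : (p * q).IsHomogeneous n)
    (hp : p ≠ 0) (hq : q ≠ 0) : ∃ k l, k + l = n ∧ p.IsHomogeneous k ∧ q.IsHomogeneous l := by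
  obtain ⟨k, hk⟩ := hom_of_mul h hp hq
  obtain ⟨l, hl⟩ := hom_of_mul (mul_comm p q ▸ h) hq hp
  exact ⟨k, l, (hk.mul hl).inj_right h (mul_ne_zero hp hq), hk, hl⟩

/-- gcd of homogeneous polynomials -/
lemma exists_gcd {σ : Type*} {F G : MvPolynomial σ ℂ} {a b : ℕ} (hF : F.IsHomogeneous a)
    (hG : G.IsHomogeneous b) (hF0 : F ≠ 0) (hG0 : G ≠ 0) :
    ∃ (D F' G' : MvPolynomial σ ℂ) (e a' b' : ℕ), F = D * F' ∧ G = D * G' ∧ e + a' = a ∧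
      e + b' = b ∧ D.IsHomogeneous e ∧ F'.IsHomogeneous a' ∧ G'.IsHomogeneous b' ∧
      IsRelPrime F' G' ∧ D ≠ 0 ∧ F' ≠ 0 ∧ G' ≠ 0 := by
  obtain ⟨x', y', c', h1, rfl, rfl⟩ := 
    UniqueFactorizationMonoid.exists_reduced_factors F hF0 G
  obtain ⟨k, l, h3, h4, h5⟩ := hom_of_mul' hF (left_ne_zero_of_mul hF0) (right_ne_zero_of_mul hF0)
  obtain ⟨k', l', h3', h4', h5'⟩ := hom_of_mul' hG (left_ne_zero_of_mul hG0) (right_ne_zero_of_mul hG0)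
  have hk : k' = k := h4'.inj_right h4 (left_ne_zero_of_mul hG0)
  subst hk
  exact ⟨c', x', y', k', l, l', rfl, rfl, h3, h3', h4, h5, h5', h1, (left_ne_zero_of_mul hF0),
    (right_ne_zero_of_mul hF0), (right_ne_zero_of_mul hG0)⟩

/-- Bezout-type identity from coprimality. -/
lemma exists_bezout {R : Type*} [CommRing R] [IsDomain R] [IsIntegrallyClosed R]
    (f g : Polynomial R) (hf : f.Monic) (h : IsRelPrime f g) :
    ∃ (A B : Polynomial R) (r : R), r ≠ 0 ∧ A * f + B * g = Polynomial.C r := by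
  let K := FractionRing R
  have hK : Function.Injective (algebraMap R K) := IsFractionRing.injective R K
  have hcop : IsCoprime (f.map (algebraMap R K)) (g.map (algebraMap R K)) := by
    apply IsRelPrime.isCoprime
    intro p hp hq
    obtain ⟨p', hp'⟩ := IsIntegrallyClosed.eq_map_mul_C_of_dvd K hf hp
    have hp0 : p ≠ 0 := by
      rintro rfl
      exact (hf.map (algebraMap R K)).ne_zero (zero_dvd_iff.1 hp)
    have hu : IsUnit (Polynomial.C p.leadingCoeff) :=
      Polynomial.isUnit_C.2 (isUnit_iff_ne_zero.2 (Polynomial.leadingCoeff_ne_zero.2 hp0))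
    have hmon : p'.Monic := by
      apply Polynomial.monic_of_injective hK
      have := congrArg Polynomial.leadingCoeff hp'
      rw [Polynomial.leadingCoeff_mul, Polynomial.leadingCoeff_C] at this
      exact mul_right_cancel₀ (Polynomial.leadingCoeff_ne_zero.2 hp0) (this.trans (one_mul _).symm)
    have hd : p'.map (algebraMap R K) ∣ p := ⟨_, hp'.symm⟩
    have u := h ((Polynomial.map_dvd_map _ hK hmon).1 (hd.trans hp))
      ((Polynomial.map_dvd_map _ hK hmon).1 (hd.trans hq))
    rw [← hp']
    exact (u.map (Polynomial.mapRingHom (algebraMap R K))).mul hu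
  by_cases h0 : f.natDegree = 0
  · refine ⟨1, 0, 1, one_ne_zero, ?_⟩
    rw [Polynomial.eq_one_of_monic_natDegree_zero hf h0]
    simp
  obtain ⟨A, B, -, -, hAB⟩ := Polynomial.exists_mul_add_mul_eq_C_resultant f g le_rfl le_rfl
    (Or.inl h0)
  refine ⟨A, B, f.resultant g, ?_, by rw [← hAB]; ring⟩
  intro hr
  have := Polynomial.resultant_map_map f g f.natDegree g.natDegree (algebraMap R K)
  rw [hr, map_zero] at this
  apply Polynomial.resultant_ne_zero _ _ hcop
  rwa [Polynomial.natDegree_map_eq_of_injective hK, Polynomial.natDegree_map_eq_of_injective hK]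

/-- Restriction to the line `x₂ = 0`, dehomogenized. -/
def rho : MvPolynomial (Fin 3) ℂ →ₐ[ℂ] Polynomial ℂ :=
  aeval ![Polynomial.X, 1, 0]

lemma rho_eq (H : MvPolynomial (Fin 3) ℂ) :
    rho H = ∑ u ∈ H.support, if u 2 = 0 then Polynomial.monomial (u 0) (H.coeff u) else 0 := by
  rw [rho, aeval_def, eval₂_eq']
  apply Finset.sum_congr rfl
  intro u _
  rw [Fin.prod_univ_three]
  split_ifs with h
  · simp [h, ← Polynomial.C_mul_X_pow_eq_monomial]
  · simp [h]

lemma hom_deg3 {H : MvPolynomial (Fin 3) ℂ} {j : ℕ} (hH : H.IsHomogeneous j)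
    {u : Fin 3 →₀ ℕ} (hu : u ∈ H.support) : u 0 + u 1 + u 2 = j := by
  have h : u.degree = j := (hH.degree_eq_sum_deg_support hu).symm
  rwa [Finsupp.degree_eq_sum, Fin.sum_univ_three] at h

lemma rho_natDegree {H : MvPolynomial (Fin 3) ℂ} {j : ℕ} (hH : H.IsHomogeneous j) :
    (rho H).natDegree ≤ j := by
  rw [rho_eq]
  apply Polynomial.natDegree_sum_le_of_forall_le
  intro u hu
  split_ifs with h
  · refine (Polynomial.natDegree_monomial_le _).trans ?_
    have := hom_deg3 hH hu
    omega
  · simp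

lemma rho_coeff {H : MvPolynomial (Fin 3) ℂ} {j : ℕ} (hH : H.IsHomogeneous j)
    (u : Fin 3 →₀ ℕ) (hu : u 2 = 0) (huj : u.degree = j) :
    (rho H).coeff (u 0) = H.coeff u := by
  rw [rho_eq, Polynomial.finsetSum_coeff, Finset.sum_eq_single u]
  · simp [hu]
  · intro w hw hne
    split_ifs with h
    · rw [Polynomial.coeff_monomial, if_neg]
      intro h0
      apply hne
      have h1 := hom_deg3 hH hw
      rw [Finsupp.degree_eq_sum, Fin.sum_univ_three] at huj
      ext i
      fin_cases i
      · exact h0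
      · simp only [Fin.mk_one]; omega
      · exact h.trans hu.symm
    · simp
  · intro h
    simp [hu, notMem_support_iff.1 h]

lemma rho_eq_zero {H : MvPolynomial (Fin 3) ℂ} {j : ℕ} (hH : H.IsHomogeneous (j + 1))
    (h : rho H = 0) : ∃ L : MvPolynomial (Fin 3) ℂ, L.IsHomogeneous j ∧ H = X 2 * L := by
  by_cases h0 : H = 0
  · exact ⟨0, isHomogeneous_zero _ _ _, by simp [h0]⟩
  have hd : (X 2 : MvPolynomial (Fin 3) ℂ) ∣ H := by
    rw [X_dvd_iff_modMonomial_eq_zero]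
    ext u
    by_cases hu : Finsupp.single 2 1 ≤ u
    · rw [coeff_modMonomial_of_le _ hu, coeff_zero]
    · rw [coeff_modMonomial_of_not_le _ hu, coeff_zero]
      by_cases hj : u.degree = j + 1
      · rw [← rho_coeff hH u _ hj, h, Polynomial.coeff_zero]
        by_contra h2
        apply hu
        rw [Finsupp.single_le_iff]
        omega
      · exact hH.coeff_eq_zero hj
  obtain ⟨L, rfl⟩ := hd
  obtain ⟨k, l, hkl, hk, hl⟩ := hom_of_mul' hH (left_ne_zero_of_mul h0) (right_ne_zero_of_mul h0)
  have : k = 1 := hk.inj_right (isHomogeneous_X _ _) (left_ne_zero_of_mul h0)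
  have : l = j := by omega
  exact ⟨L, this ▸ hl, rfl⟩

def homz (N : ℕ) (u : Polynomial ℂ) : MvPolynomial (Fin 3) ℂ :=
  ∑ i ∈ Finset.range (N + 1), C (u.coeff i) * (X 0 ^ i * X 1 ^ (N - i))

lemma homz_hom (N : ℕ) (u : Polynomial ℂ) : (homz N u).IsHomogeneous N := by
  apply IsHomogeneous.sum
  intro i hi
  apply IsHomogeneous.C_mul
  have := (isHomogeneous_X_pow (R := ℂ) (0 : Fin 3) i).mul (isHomogeneous_X_pow (R := ℂ) (1 : Fin 3) (N - i))
  have h : i + (N - i) = N := by have := Finset.mem_range.1 hi; omega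
  rwa [h] at this

lemma rho_homz (N : ℕ) (u : Polynomial ℂ) (hu : u.natDegree ≤ N) : rho (homz N u) = u := by
  conv_rhs => rw [u.as_sum_range' (N + 1) (by omega)]
  simp [homz, rho, ← Polynomial.C_mul_X_pow_eq_monomial]

lemma span_line {F G H : MvPolynomial (Fin 3) ℂ} {a b j : ℕ} (hF : F.IsHomogeneous a)
    (hG : G.IsHomogeneous b) (hH : H.IsHomogeneous (j + 1)) (hp : (rho F).natDegree = a)
    (hp0 : rho F ≠ 0)
    (hcop : IsCoprime (rho F) (rho G)) (hj : a + b ≤ j + 2) (ha : a ≤ j + 1) (hb : b ≤ j + 1) :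
    ∃ A B L : MvPolynomial (Fin 3) ℂ, L.IsHomogeneous j ∧ H = A * F + B * G + X 2 * L := by
  obtain ⟨x, y, hxy⟩ := hcop
  set p := rho F with hpd
  set q := rho G with hqd
  set r := rho H with hrd
  set w := (r * y) % p with hw
  set u := r * x + ((r * y) / p) * q with hu
  have huw : u * p + w * q = r := by
    have := EuclideanDomain.div_add_mod (r * y) p
    calc u * p + w * q = r * x * p + (p * ((r * y) / p) + (r * y) % p) * q := by
          rw [hu, hw]; ring
      _ = r * (x * p + y * q) := by rw [this]; ring
      _ = r := by rw [hxy, mul_one]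
  have hwdeg : w.degree < p.degree := EuclideanDomain.mod_lt _ hp0
  have hq : q.natDegree ≤ b := rho_natDegree hG
  have hr : r.natDegree ≤ j + 1 := rho_natDegree hH
  have hwb : w.natDegree ≤ j + 1 - b := by
    by_cases hw0 : w = 0
    · simp [hw0]
    · have := Polynomial.natDegree_lt_natDegree hw0 hwdeg
      omega
  have hwq : (w * q).natDegree ≤ j + 1 := by
    have := Polynomial.natDegree_mul_le (p := w) (q := q)
    omega
  have hua : u.natDegree ≤ j + 1 - a := by
    by_cases hu0 : u = 0
    · simp [hu0]
    · have h1 : (u * p).natDegree ≤ j + 1 := by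
        have : u * p = r - w * q := by rw [← huw]; ring
        rw [this]
        exact (Polynomial.natDegree_sub_le _ _).trans (max_le hr hwq)
      rw [Polynomial.natDegree_mul hu0 hp0] at h1
      omega
  have hK : (H - homz (j + 1 - a) u * F - homz (j + 1 - b) w * G).IsHomogeneous (j + 1) := by
    refine (hH.sub ?_).sub ?_
    · have := (homz_hom (j + 1 - a) u).mul hF
      rwa [Nat.sub_add_cancel ha] at this
    · have := (homz_hom (j + 1 - b) w).mul hG
      rwa [Nat.sub_add_cancel hb] at this
  obtain ⟨L, hL, hL2⟩ := rho_eq_zero hK (by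
    rw [map_sub, map_sub, map_mul, map_mul, rho_homz _ _ hua, rho_homz _ _ hwb,
      ← hpd, ← hqd, ← hrd, ← huw]
    ring)
  refine ⟨homz (j + 1 - a) u, homz (j + 1 - b) w, L, hL, ?_⟩
  rw [← hL2]; ring

/-- Relations propagate to higher degree. -/
lemma ci_iter {ι : Type*} [Fintype ι] {F G : MvPolynomial (Fin 3) ℂ} {a b d : ℕ}
    (v : ι → Fin 3 → ℂ) (c : ι → ℂ) (hF : F.IsHomogeneous a)
    (hG : G.IsHomogeneous b) (hp : (rho F).natDegree = a)
    (hp0 : rho F ≠ 0) (hcop : IsCoprime (rho F) (rho G)) (hj : a + b ≤ d + 2) (ha : a ≤ d + 1)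
    (hb : b ≤ d + 1) (hvF : ∀ i, eval (v i) F = 0) (hvG : ∀ i, eval (v i) G = 0)
    (hv2 : ∀ i, v i 2 ≠ 0)
    (hrel : ∀ H : MvPolynomial (Fin 3) ℂ, H.IsHomogeneous d → ∑ i, c i * eval (v i) H = 0)
    (N : ℕ) : ∀ H : MvPolynomial (Fin 3) ℂ, H.IsHomogeneous (d + N) →
      ∑ i, c i / (v i 2) ^ N * eval (v i) H = 0 := by
  induction N with
  | zero => simpa using hrel
  | succ N ih =>
    intro H hH
    obtain ⟨A, B, L, hL, rfl⟩ := span_line hF hG (j := d + N) hH hp hp0 hcop (by omega)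
      (by omega) (by omega)
    rw [← ih L hL]
    apply Finset.sum_congr rfl
    intro i _
    simp only [map_add, map_mul, hvF, hvG, eval_X]
    have := hv2 i
    field_simp
    ring

lemma ci_zero {ι : Type*} [Fintype ι] {F G : MvPolynomial (Fin 3) ℂ} {a b d : ℕ}
    (v : ι → Fin 3 → ℂ) (c : ι → ℂ) (hF : F.IsHomogeneous a)
    (hG : G.IsHomogeneous b) (hp : (rho F).natDegree = a)
    (hp0 : rho F ≠ 0) (hcop : IsCoprime (rho F) (rho G)) (hj : a + b ≤ d + 2) (ha : a ≤ d + 1)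
    (hb : b ≤ d + 1) (hvF : ∀ i, eval (v i) F = 0) (hvG : ∀ i, eval (v i) G = 0)
    (hv2 : ∀ i, v i 2 ≠ 0)
    (hsep : ∀ i j, i ≠ j → ∃ L : MvPolynomial (Fin 3) ℂ, L.IsHomogeneous 1 ∧
      eval (v i) L = 0 ∧ eval (v j) L ≠ 0)
    (hrel : ∀ H : MvPolynomial (Fin 3) ℂ, H.IsHomogeneous d → ∑ i, c i * eval (v i) H = 0) :
    ∀ i, c i = 0 := by
  classical
  intro i₀
  have hsep' : ∀ i, ∃ L : MvPolynomial (Fin 3) ℂ, i ≠ i₀ → L.IsHomogeneous 1 ∧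
      eval (v i) L = 0 ∧ eval (v i₀) L ≠ 0 := by
    intro i
    by_cases h : i = i₀
    · exact ⟨0, fun h' => absurd h h'⟩
    · obtain ⟨L, hL⟩ := hsep i i₀ h
      exact ⟨L, fun _ => hL⟩
  choose L hL using hsep'
  set P := ∏ i ∈ Finset.univ.erase i₀, L i with hP
  have hPh : P.IsHomogeneous (Finset.univ.erase i₀).card := by
    have := IsHomogeneous.prod (Finset.univ.erase i₀) L (fun _ => 1)
      (fun i hi => (hL i (Finset.ne_of_mem_erase hi)).1)
    simpa using this
  have hX : ((X 2 : MvPolynomial (Fin 3) ℂ) ^ d * P).IsHomogeneous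
    (d + (Finset.univ.erase i₀).card) := (isHomogeneous_X_pow _ _).mul hPh
  have := ci_iter v c hF hG hp hp0 hcop hj ha hb hvF hvG hv2 hrel _ _ hX
  rw [Finset.sum_eq_single i₀] at this
  · have hP0 : eval (v i₀) P ≠ 0 := by
      rw [hP, map_prod]
      exact Finset.prod_ne_zero_iff.2 fun i hi => (hL i (Finset.ne_of_mem_erase hi)).2.2
    simp only [map_mul, map_pow, eval_X] at this
    have h2 := hv2 i₀
    by_contra hc
    revert this
    exact mul_ne_zero (div_ne_zero hc (pow_ne_zero _ h2)) (mul_ne_zero (pow_ne_zero _ h2) hP0)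
  · intro i _ hi
    have : eval (v i) P = 0 := by
      rw [hP, map_prod]
      exact Finset.prod_eq_zero (Finset.mem_erase.2 ⟨hi, Finset.mem_univ i⟩) (hL i hi).2.1
    simp [this]
  · simp

/-- Linear substitution. -/
def lsub (M : Matrix (Fin 3) (Fin 3) ℂ) : MvPolynomial (Fin 3) ℂ →ₐ[ℂ] MvPolynomial (Fin 3) ℂ :=
  aeval (fun i => ∑ j, C (M i j) * X j)

lemma eval_lsub (M : Matrix (Fin 3) (Fin 3) ℂ) (x : Fin 3 → ℂ) (F : MvPolynomial (Fin 3) ℂ) :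
    eval x (lsub M F) = eval (M.mulVec x) F := by
  induction F using MvPolynomial.induction_on with
  | C a => simp [lsub]
  | add p q hp hq => simp [hp, hq]
  | mul_X p i hp => rw [map_mul, map_mul, hp]; simp [lsub, Matrix.mulVec, dotProduct]

lemma lsub_lsub {M N : Matrix (Fin 3) (Fin 3) ℂ} (h : M * N = 1) (F : MvPolynomial (Fin 3) ℂ) :
    lsub N (lsub M F) = F := by
  apply MvPolynomial.funext
  intro x
  rw [eval_lsub, eval_lsub, Matrix.mulVec_mulVec, h, Matrix.one_mulVec]

lemma lsub_hom (M : Matrix (Fin 3) (Fin 3) ℂ) {F : MvPolynomial (Fin 3) ℂ} {a : ℕ}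
    (hF : F.IsHomogeneous a) : (lsub M F).IsHomogeneous a := by
  have := hF.aeval (n := 1) (fun i => ∑ j, C (M i j) * X j) (fun i => by
    apply IsHomogeneous.sum
    intro j _
    exact isHomogeneous_C_mul_X _ _)
  simpa [lsub] using this

structure CIHyp {ι : Type*} [Fintype ι] (F G : MvPolynomial (Fin 3) ℂ) (a b d : ℕ)
    (v : ι → Fin 3 → ℂ) (c : ι → ℂ) : Prop where
  hF : F.IsHomogeneous a
  hG : G.IsHomogeneous b
  rel : IsRelPrime F G
  hF0 : F ≠ 0
  hv : ∀ i, v i ≠ 0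
  hvF : ∀ i, eval (v i) F = 0
  hvG : ∀ i, eval (v i) G = 0
  hsep : ∀ i j, i ≠ j → ∃ L : MvPolynomial (Fin 3) ℂ, L.IsHomogeneous 1 ∧
      eval (v i) L = 0 ∧ eval (v j) L ≠ 0
  hrel : ∀ H : MvPolynomial (Fin 3) ℂ, H.IsHomogeneous d → ∑ i, c i * eval (v i) H = 0

lemma CIHyp.transport {ι : Type*} [Fintype ι] {F G : MvPolynomial (Fin 3) ℂ} {a b d : ℕ}
    {v : ι → Fin 3 → ℂ} {c : ι → ℂ} (h : CIHyp F G a b d v c) {M N : Matrix (Fin 3) (Fin 3) ℂ}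
    (hMN : M * N = 1) :
    CIHyp (lsub M F) (lsub M G) a b d (fun i => N.mulVec (v i)) c := by
  have hNM : N * M = 1 := mul_eq_one_comm.1 hMN
  have e : ∀ (H : MvPolynomial (Fin 3) ℂ) i, eval (N.mulVec (v i)) (lsub M H) = eval (v i) H := by
    intro H i
    rw [eval_lsub, Matrix.mulVec_mulVec, hMN, Matrix.one_mulVec]
  refine ⟨lsub_hom M h.hF, lsub_hom M h.hG, ?_, ?_, ?_, ?_, ?_, ?_, ?_⟩
  · rintro p ⟨q, hq⟩ ⟨r, hr⟩
    have h1 : lsub N p ∣ F := ⟨lsub N q, by rw [← map_mul, ← hq, lsub_lsub hMN]⟩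
    have h2 : lsub N p ∣ G := ⟨lsub N r, by rw [← map_mul, ← hr, lsub_lsub hMN]⟩
    have := (h.rel h1 h2).map (lsub M)
    rwa [lsub_lsub hNM] at this
  · intro h0
    apply h.hF0
    rw [← lsub_lsub hMN F, h0, map_zero]
  · intro i hi
    apply h.hv i
    rw [← Matrix.one_mulVec (v i), ← hMN, ← Matrix.mulVec_mulVec, hi, Matrix.mulVec_zero]
  · intro i; rw [e]; exact h.hvF i
  · intro i; rw [e]; exact h.hvG i
  · intro i j hij
    obtain ⟨L, h1, h2, h3⟩ := h.hsep i j hij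
    exact ⟨lsub M L, lsub_hom M h1, by rw [e]; exact h2, by rw [e]; exact h3⟩
  · intro H hH
    have := h.hrel (lsub N H) (lsub_hom N hH)
    rw [← this]
    apply Finset.sum_congr rfl
    intro i _
    rw [eval_lsub]

lemma eval_e0 {F : MvPolynomial (Fin 3) ℂ} {a : ℕ} (hF : F.IsHomogeneous a) (c : ℂ) :
    eval ![c, 0, 0] F = F.coeff (Finsupp.cons a 0) * c ^ a := by
  rw [eval_eq', Finset.sum_eq_single (Finsupp.cons a 0)]
  · have h1 : (Finsupp.cons a (0 : Fin 2 →₀ ℕ)) 1 = 0 := rfl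
    have h2 : (Finsupp.cons a (0 : Fin 2 →₀ ℕ)) 2 = 0 := rfl
    rw [Fin.prod_univ_three, h1, h2, Finsupp.cons_zero]
    simp
  · intro u hu hne
    rw [Fin.prod_univ_three]
    by_cases h1 : u 1 = 0
    · by_cases h2 : u 2 = 0
      · exfalso
        apply hne
        have := hom_deg3 hF hu
        ext i
        fin_cases i
        · simp; omega
        · exact h1
        · exact h2
      · simp [h2]
    · simp [h1]
  · intro h
    simp [notMem_support_iff.1 h]

lemma ci_bezout {F G : MvPolynomial (Fin 3) ℂ} {a : ℕ} (hF : F.IsHomogeneous a)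
    (hrel : IsRelPrime F G) {κ : ℂ} (hκd : κ = F.coeff (Finsupp.cons a 0)) (hκ : κ ≠ 0) :
    (finSuccEquiv ℂ 2 F).coeff a = C κ ∧
    ∃ (A B : Polynomial (MvPolynomial (Fin 2) ℂ)) (r : MvPolynomial (Fin 2) ℂ), r ≠ 0 ∧
      A * (finSuccEquiv ℂ 2 F) + B * (finSuccEquiv ℂ 2 G) = Polynomial.C r := by
  set f := finSuccEquiv ℂ 2 F with hf
  set g := finSuccEquiv ℂ 2 G with hg
  have hfdeg : f.natDegree ≤ a := by
    rw [hf, natDegree_finSuccEquiv]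
    exact (degreeOf_le_totalDegree _ _).trans hF.totalDegree_le
  have hfa : f.coeff a = C κ := by
    have h0 : (f.coeff a).IsHomogeneous 0 :=
      IsHomogeneous.finSuccEquiv_coeff_isHomogeneous hF a 0 (by omega)
    rw [hκd, ← finSuccEquiv_coeff_coeff]
    exact (totalDegree_eq_zero_iff_eq_C.1 ((totalDegree_zero_iff_isHomogeneous _).2 h0))
  have hu : IsUnit (Polynomial.C (C κ⁻¹ : MvPolynomial (Fin 2) ℂ)) :=
    Polynomial.isUnit_C.2 ((isUnit_iff_ne_zero.2 (inv_ne_zero hκ)).map C)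
  have hmon : (Polynomial.C (C κ⁻¹ : MvPolynomial (Fin 2) ℂ) * f).Monic := by
    apply Polynomial.monic_of_natDegree_le_of_coeff_eq_one a
    · exact (Polynomial.natDegree_C_mul_le _ _).trans hfdeg
    · rw [Polynomial.coeff_C_mul, hfa, ← map_mul, inv_mul_cancel₀ hκ, map_one]
  have hrelq : IsRelPrime (Polynomial.C (C κ⁻¹ : MvPolynomial (Fin 2) ℂ) * f) g := by
    rw [isRelPrime_mul_unit_left_left hu]
    intro p hp hq
    have h1 : (finSuccEquiv ℂ 2).symm p ∣ F := by
      have := map_dvd (finSuccEquiv ℂ 2).symm hp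
      rwa [hf, AlgEquiv.symm_apply_apply] at this
    have h2 : (finSuccEquiv ℂ 2).symm p ∣ G := by
      have := map_dvd (finSuccEquiv ℂ 2).symm hq
      rwa [hg, AlgEquiv.symm_apply_apply] at this
    have := (hrel h1 h2).map (finSuccEquiv ℂ 2)
    rwa [AlgEquiv.apply_symm_apply] at this
  obtain ⟨A, B, r, hr, hAB⟩ := exists_bezout _ _ hmon hrelq
  refine ⟨hfa, A * Polynomial.C (C κ⁻¹), B, r, hr, ?_⟩
  rw [← hAB]; ring

lemma rho_lsub (x : Fin 2 → ℂ) (H : MvPolynomial (Fin 3) ℂ) :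
    rho (lsub !![1, 0, 0; 0, x 0, 0; 0, x 1, 1] H) = (finSuccEquiv ℂ 2 H).map (eval x) := by
  have e : rho.comp (lsub !![1, 0, 0; 0, x 0, 0; 0, x 1, 1]) =
      (Polynomial.mapAlgHom (aeval x)).comp (finSuccEquiv ℂ 2).toAlgHom := by
    apply MvPolynomial.algHom_ext
    intro i
    rw [AlgHom.comp_apply, AlgHom.comp_apply]
    have e0 : (finSuccEquiv ℂ 2) (X 0) = Polynomial.X := finSuccEquiv_X_zero
    have e1 : (finSuccEquiv ℂ 2) (X 1) = Polynomial.C (X 0) := finSuccEquiv_X_succ (j := 0)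
    have e2 : (finSuccEquiv ℂ 2) (X 2) = Polynomial.C (X 1) := finSuccEquiv_X_succ (j := 1)
    fin_cases i
    · simp [lsub, rho, Fin.sum_univ_three, e0]
    · simp [lsub, rho, Fin.sum_univ_three, e1]
    · simp [lsub, rho, Fin.sum_univ_three, e2]
  have := DFunLike.congr_fun e H
  simpa [aeval_eq_eval] using this

lemma ci_one {ι : Type*} [Fintype ι] {F G : MvPolynomial (Fin 3) ℂ} {a b d : ℕ}
    {v : ι → Fin 3 → ℂ} {c : ι → ℂ} (h : CIHyp F G a b d v c)
    (hj : a + b ≤ d + 2) (ha : a ≤ d + 1) (hb : b ≤ d + 1)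
    (hκ : F.coeff (Finsupp.cons a 0) ≠ 0) : ∀ i, c i = 0 := by
  obtain ⟨hfa, A, B, r, hr, hAB⟩ := ci_bezout h.hF h.rel rfl hκ
  -- choose the line
  have hlin : ∀ i, (C (v i 2) * X 0 - C (v i 1) * X 1 : MvPolynomial (Fin 2) ℂ) ≠ 0 := by
    intro i h0
    have e1 := congrArg (eval ![1, 0]) h0
    have e2 := congrArg (eval ![0, 1]) h0
    simp at e1 e2
    have hvi : v i = ![v i 0, 0, 0] := by
      ext k
      fin_cases k
      · rfl
      · exact e2
      · exact e1
    have e3 := h.hvF i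
    rw [hvi, eval_e0 h.hF] at e3
    have e4 : v i 0 ≠ 0 := by
      intro h4
      apply h.hv i
      rw [hvi, h4]
      ext k
      fin_cases k <;> rfl
    exact mul_ne_zero hκ (pow_ne_zero _ e4) e3
  have hprod : r * (X 0 * ∏ i, (C (v i 2) * X 0 - C (v i 1) * X 1 : MvPolynomial (Fin 2) ℂ)) ≠ 0 :=
    mul_ne_zero hr (mul_ne_zero (X_ne_zero _) (Finset.prod_ne_zero_iff.2 fun i _ => hlin i))
  obtain ⟨x, hx⟩ : ∃ x, eval x (r * (X 0 * ∏ i, (C (v i 2) * X 0 - C (v i 1) * X 1 :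
      MvPolynomial (Fin 2) ℂ))) ≠ 0 := by
    by_contra! hc
    exact hprod (MvPolynomial.funext (by simpa using hc))
  rw [map_mul, map_mul, map_prod, eval_X] at hx
  have hxr := left_ne_zero_of_mul hx
  have hx0 := left_ne_zero_of_mul (right_ne_zero_of_mul hx)
  have hxi : ∀ i, v i 2 * x 0 - v i 1 * x 1 ≠ 0 := by
    intro i
    have := Finset.prod_ne_zero_iff.1 (right_ne_zero_of_mul (right_ne_zero_of_mul hx)) i
      (Finset.mem_univ i)
    simpa using this
  let M : Matrix (Fin 3) (Fin 3) ℂ := !![1, 0, 0; 0, x 0, 0; 0, x 1, 1]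
  let N : Matrix (Fin 3) (Fin 3) ℂ := !![1, 0, 0; 0, (x 0)⁻¹, 0; 0, - x 1 / x 0, 1]
  have hMN : M * N = 1 := by
    ext i j
    fin_cases i <;> fin_cases j <;> simp [M, N, Matrix.mul_apply, Fin.sum_univ_three, hx0] <;>
      field_simp <;> ring
  have h' := h.transport hMN
  have hrho : ∀ H : MvPolynomial (Fin 3) ℂ,
      rho (lsub M H) = (finSuccEquiv ℂ 2 H).map (eval x) := fun H => rho_lsub x H
  have hca : (rho (lsub M F)).coeff a = F.coeff (Finsupp.cons a 0) := by
    rw [hrho, Polynomial.coeff_map, hfa, eval_C]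
  refine ci_zero _ c h'.hF h'.hG ?_ ?_ ?_ hj ha hb h'.hvF h'.hvG ?_ h'.hsep h'.hrel
  · apply le_antisymm (rho_natDegree h'.hF)
    apply Polynomial.le_natDegree_of_ne_zero
    rwa [hca]
  · intro h0
    rw [h0, Polynomial.coeff_zero] at hca
    exact hκ hca.symm
  · rw [hrho, hrho]
    have := congrArg (Polynomial.map (eval x)) hAB
    rw [Polynomial.map_add, Polynomial.map_mul, Polynomial.map_mul, Polynomial.map_C] at this
    refine ⟨Polynomial.C (eval x r)⁻¹ * Polynomial.map (eval x) A,
      Polynomial.C (eval x r)⁻¹ * Polynomial.map (eval x) B, ?_⟩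
    rw [mul_assoc, mul_assoc, ← mul_add, this, ← map_mul, inv_mul_cancel₀ hxr, map_one]
  · intro i h0
    apply hxi i
    simp [N, Matrix.mulVec, dotProduct, Fin.sum_univ_three] at h0
    field_simp at h0
    linear_combination h0

lemma ci {ι : Type*} [Fintype ι] {F G : MvPolynomial (Fin 3) ℂ} {a b d : ℕ}
    {v : ι → Fin 3 → ℂ} {c : ι → ℂ} (h : CIHyp F G a b d v c)
    (hj : a + b ≤ d + 2) (ha : a ≤ d + 1) (hb : b ≤ d + 1) : ∀ i, c i = 0 := by
  obtain ⟨u, hu⟩ : ∃ u, eval u (X 0 * F) ≠ 0 := by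
    by_contra! hc
    exact mul_ne_zero (X_ne_zero _) h.hF0 (MvPolynomial.funext (by simpa using hc))
  rw [map_mul, eval_X] at hu
  have hu0 := left_ne_zero_of_mul hu
  let M : Matrix (Fin 3) (Fin 3) ℂ := !![u 0, 0, 0; u 1, 1, 0; u 2, 0, 1]
  let N : Matrix (Fin 3) (Fin 3) ℂ := !![(u 0)⁻¹, 0, 0; -u 1 / u 0, 1, 0; - u 2 / u 0, 0, 1]
  have hMN : M * N = 1 := by
    ext i j
    fin_cases i <;> fin_cases j <;> simp [M, N, Matrix.mul_apply, Fin.sum_univ_three, hu0] <;>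
      field_simp <;> ring
  refine ci_one (h.transport hMN) hj ha hb ?_
  have := eval_e0 (lsub_hom M h.hF) 1
  rw [one_pow, mul_one] at this
  rw [← this, eval_lsub]
  have e : M.mulVec ![1, 0, 0] = u := by
    ext i
    fin_cases i <;> simp [M, Matrix.mulVec, dotProduct, Fin.sum_univ_three]
  rw [e]
  exact right_ne_zero_of_mul hu

lemma finrank_hom (k : ℕ) :
    Module.finrank ℂ (homogeneousSubmodule (Fin 3) ℂ k) = (k + 2).choose 2 := by
  have hs : {d : Fin 3 →₀ ℕ | d.degree = k} =
      ((Finset.finsuppAntidiag (Finset.univ : Finset (Fin 3)) k : Finset (Fin 3 →₀ ℕ)) :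
        Set (Fin 3 →₀ ℕ)) := by
    ext u
    simp [Finset.mem_finsuppAntidiag, Finsupp.degree_eq_sum]
  rw [homogeneousSubmodule_eq_finsupp_supported, hs,
    (AddMonoidAlgebra.supportedEquivFinsupp _).finrank_eq, Module.finrank_finsupp_self]
  simp only [Finset.coe_sort_coe, Fintype.card_coe]
  rw [Finset.card_finsuppAntidiag_nat_eq_choose]
  simp only [Finset.card_univ, Fintype.card_fin]
  rw [show 3 + k - 1 = k + 2 by omega]
  exact Nat.choose_symm_add

instance finHom (k : ℕ) : Module.Finite ℂ (homogeneousSubmodule (Fin 3) ℂ k) :=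
  Module.Finite.iff_fg.2 (homogeneousSubmodule_fg _ _ k)

lemma two_mul_choose (k : ℕ) : 2 * (k + 2).choose 2 = (k + 2) * (k + 1) := by
  have := Nat.add_choose_mul_factorial_mul_factorial k 2
  rw [Nat.choose_two_right]
  have h : 2 ∣ (k + 2) * (k + 2 - 1) := (Nat.even_mul_pred_self (k + 2)).two_dvd
  rw [Nat.mul_div_cancel' h]
  rfl

lemma finrank_hom' (k : ℕ) :
    2 * Module.finrank ℂ (homogeneousSubmodule (Fin 3) ℂ k) = (k + 2) * (k + 1) := by
  rw [finrank_hom, two_mul_choose]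

/-- Evaluation at the points. -/
def evalMap {ι : Type*} (v : ι → Fin 3 → ℂ) (k : ℕ) :
    homogeneousSubmodule (Fin 3) ℂ k →ₗ[ℂ] (ι → ℂ) :=
  (LinearMap.pi fun i => (aeval (R := ℂ) (v i)).toLinearMap) ∘ₗ (Submodule.subtype _)

lemma evalMap_apply {ι : Type*} (v : ι → Fin 3 → ℂ) (k : ℕ)
    (F : homogeneousSubmodule (Fin 3) ℂ k) (i : ι) : evalMap v k F i = eval (v i) F.1 := by
  simp [evalMap, aeval_eq_eval]

lemma orth_s3 {ι : Type*} [Fintype ι] {d : ℕ} {v : ι → Fin 3 → ℂ} {c : ι → ℂ}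
    (hc : ∀ i, c i ≠ 0)
    (hrel : ∀ H : MvPolynomial (Fin 3) ℂ, H.IsHomogeneous d → ∑ i, c i * eval (v i) H = 0)
    {k l : ℕ} (hkl : k + l = d) :
    Module.finrank ℂ (LinearMap.range (evalMap v k)) +
      Module.finrank ℂ (LinearMap.range (evalMap v l)) ≤ Fintype.card ι := by
  classical
  let T : (ι → ℂ) →ₗ[ℂ] Module.Dual ℂ (ι → ℂ) :=
    { toFun := fun u =>
        { toFun := fun w => ∑ i, c i * u i * w i
          map_add' := by intros; simp [mul_add, Finset.sum_add_distrib]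
          map_smul' := by intros; simp [Finset.mul_sum]; congr; ext; ring }
      map_add' := by intros; ext; simp [mul_add, add_mul, Finset.sum_add_distrib]
      map_smul' := by 
        intros; ext; simp only [LinearMap.coe_comp, Function.comp_apply, LinearMap.coe_mk,
          AddHom.coe_mk, LinearMap.smul_apply, Pi.smul_apply, smul_eq_mul, RingHom.id_apply,
          Finset.mul_sum]
        exact Finset.sum_congr rfl fun _ _ => by ring }
  have hT : Function.Injective T := by
    rw [injective_iff_map_eq_zero]
    intro u hu
    ext i
    have := LinearMap.congr_fun hu (Pi.single i 1)
    simp [T, Pi.single_apply, hc i] at this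
    exact this
  have h1 : (LinearMap.range (evalMap v k)).map T ≤
      (LinearMap.range (evalMap v l)).dualAnnihilator := by
    rintro _ ⟨_, ⟨F, rfl⟩, rfl⟩
    rw [Submodule.mem_dualAnnihilator]
    rintro _ ⟨G, rfl⟩
    have := hrel (F.1 * G.1) (hkl ▸ F.2.mul G.2)
    rw [← this]
    simp [T, evalMap_apply, mul_assoc]
  have h2 := Submodule.finrank_mono h1
  rw [← (Submodule.equivMapOfInjective T hT _).finrank_eq] at h2
  have h3 := Subspace.finrank_add_finrank_dualAnnihilator_eq (LinearMap.range (evalMap v l))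
  rw [Module.finrank_fintype_fun_eq_card] at h3
  omega

lemma rank_inj {ι : Type*} [Fintype ι] {v : ι → Fin 3 → ℂ} {k : ℕ}
    (h : ¬ ∃ F : MvPolynomial (Fin 3) ℂ, F ≠ 0 ∧ F.IsHomogeneous k ∧ ∀ i, eval (v i) F = 0) :
    2 * Module.finrank ℂ (LinearMap.range (evalMap v k)) = (k + 2) * (k + 1) := by
  rw [LinearMap.finrank_range_of_inj, finrank_hom']
  rw [injective_iff_map_eq_zero]
  intro F hF
  by_contra h0
  apply h
  refine ⟨F.1, by simpa using h0, F.2, fun i => ?_⟩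
  rw [← evalMap_apply, hF]; rfl

lemma dvd_of_min {ι : Type*} [Fintype ι] {d t k : ℕ} {v : ι → Fin 3 → ℂ} {c : ι → ℂ}
    (hv : ∀ i, v i ≠ 0)
    (hsep : ∀ i j, i ≠ j → ∃ L : MvPolynomial (Fin 3) ℂ, L.IsHomogeneous 1 ∧
      eval (v i) L = 0 ∧ eval (v j) L ≠ 0)
    (hc : ∀ i, c i ≠ 0)
    (hrel : ∀ H : MvPolynomial (Fin 3) ℂ, H.IsHomogeneous d → ∑ i, c i * eval (v i) H = 0)
    (htk : t + k = d + 1) (htd : t ≤ d)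
    (hmin : ∀ e < t, ¬ ∃ F : MvPolynomial (Fin 3) ℂ, F ≠ 0 ∧ F.IsHomogeneous e ∧
      ∀ i, eval (v i) F = 0)
    {F G : MvPolynomial (Fin 3) ℂ} (hF0 : F ≠ 0) (hF : F.IsHomogeneous t)
    (hFv : ∀ i, eval (v i) F = 0) (hG : G.IsHomogeneous k) (hGv : ∀ i, eval (v i) G = 0) :
    F ∣ G := by
  classical
  by_cases hG0 : G = 0
  · simp [hG0]
  obtain ⟨D, F', G', e, a, b, hFD, hGD, hea, heb, hD, hF', hG', hrp, hD0, hF0', hG0'⟩ :=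
    exists_gcd hF hG hF0 hG0
  rcases Nat.eq_zero_or_pos a with ha | ha
  · subst ha
    have h1 := (totalDegree_eq_zero_iff_eq_C.1 ((totalDegree_zero_iff_isHomogeneous _).2 hF'))
    have h2 : IsUnit F' := by
      rw [h1]
      refine IsUnit.map C (isUnit_iff_ne_zero.2 ?_)
      intro h3
      rw [h3, map_zero] at h1
      exact hF0' h1
    rw [hFD, hGD]
    exact (h2.mul_right_dvd.2 dvd_rfl).trans (dvd_mul_right D G')
  exfalso
  apply hmin e (by omega)
  refine ⟨D, hD0, hD, ?_⟩
  by_contra! hcon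
  obtain ⟨i₀, hi₀⟩ := hcon
  have hyp : CIHyp F' G' a b (d - e) (fun i : {i // eval (v i) D ≠ 0} => v i)
      (fun i => c i * eval (v i) D) := by
    refine ⟨hF', hG', hrp, hF0', fun i => hv i, ?_, ?_, ?_, ?_⟩
    · intro i
      have := hFv i
      rw [hFD, map_mul] at this
      exact (mul_eq_zero.1 this).resolve_left i.2
    · intro i
      have := hGv i
      rw [hGD, map_mul] at this
      exact (mul_eq_zero.1 this).resolve_left i.2
    · intro i j hij
      exact hsep i j (fun h => hij (Subtype.ext h))
    · intro H hH
      have h1 := hrel (D * H) (by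
        have := hD.mul hH
        rwa [show e + (d - e) = d by omega] at this)
      refine Eq.trans ?_ h1
      refine (Finset.sum_subtype (F := _) (Finset.univ.filter (fun i => eval (v i) D ≠ 0))
        (fun i => by simp only [Finset.mem_filter, Finset.mem_univ, true_and])
        (fun i => c i * eval (v i) D * eval (v i) H)).symm.trans ?_
      rw [Finset.sum_filter]
      refine Finset.sum_congr rfl fun i _ => ?_
      rw [map_mul]
      split_ifs with h
      · ring
      · rw [not_not.1 h]; ring
  have := ci hyp (by omega) (by omega) (by omega) ⟨i₀, hi₀⟩
  exact mul_ne_zero (hc i₀) hi₀ this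

lemma rank_ker {ι : Type*} [Fintype ι] {v : ι → Fin 3 → ℂ} {t l : ℕ}
    {F : MvPolynomial (Fin 3) ℂ} (hF0 : F ≠ 0) (hF : F.IsHomogeneous t)
    (h : ∀ G : MvPolynomial (Fin 3) ℂ, G.IsHomogeneous (t + l) → (∀ i, eval (v i) G = 0) → F ∣ G) :
    (t + l + 2) * (t + l + 1) ≤
      2 * Module.finrank ℂ (LinearMap.range (evalMap v (t + l))) + (l + 2) * (l + 1) := by
  rw [← finrank_hom', ← finrank_hom']
  have h1 := LinearMap.finrank_range_add_finrank_ker (evalMap v (t + l))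
  have h2 : (LinearMap.ker (evalMap v (t + l))).map (Submodule.subtype _) ≤
      (homogeneousSubmodule (Fin 3) ℂ l).map (LinearMap.mulLeft ℂ F) := by
    rintro _ ⟨G, hG, rfl⟩
    have hG' : ∀ i, eval (v i) G.1 = 0 := by
      intro i
      rw [← evalMap_apply, LinearMap.mem_ker.1 hG]; rfl
    obtain ⟨Q, hQ⟩ := h G.1 G.2 hG'
    by_cases hQ0 : Q = 0
    · refine ⟨0, zero_mem _, ?_⟩
      simp [hQ, hQ0]
    · refine ⟨Q, ?_, by simp [hQ]⟩
      obtain ⟨k, l', hkl, hk, hl⟩ := hom_of_mul' (hQ ▸ G.2 : (F * Q).IsHomogeneous (t + l)) hF0 hQ0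
      have := hk.inj_right hF hF0
      have : l' = l := by omega
      exact this ▸ hl
  have h3 := Submodule.finrank_mono h2
  have h4 := Submodule.finrank_map_le (LinearMap.mulLeft ℂ F) (homogeneousSubmodule (Fin 3) ℂ l)
  rw [Submodule.finrank_map_subtype_eq] at h3
  omega

lemma core {ι : Type*} [Fintype ι] [Nonempty ι] {d m : ℕ} {v : ι → Fin 3 → ℂ} {c : ι → ℂ}
    (hv : ∀ i, v i ≠ 0)
    (hsep : ∀ i j, i ≠ j → ∃ L : MvPolynomial (Fin 3) ℂ, L.IsHomogeneous 1 ∧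
      eval (v i) L = 0 ∧ eval (v j) L ≠ 0)
    (hc : ∀ i, c i ≠ 0) (hd : 3 ≤ d)
    (hrel : ∀ H : MvPolynomial (Fin 3) ℂ, H.IsHomogeneous d → ∑ i, c i * eval (v i) H = 0)
    (hm : (d + 3 = 2 * m ∧ Fintype.card ι ≤ m ^ 2 + 1) ∨
      (d + 3 = 2 * m + 1 ∧ Fintype.card ι ≤ m ^ 2 + m)) :
    ∃ (t : ℕ) (F : MvPolynomial (Fin 3) ℂ), 1 ≤ t ∧ 2 * t ≤ d + 3 ∧ F ≠ 0 ∧ F.IsHomogeneous t ∧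
      (∀ i, eval (v i) F = 0) ∧ t * (d + 3 - t) ≤ Fintype.card ι := by
  classical
  have hex : ∃ t, t ≤ m ∧ ∃ F : MvPolynomial (Fin 3) ℂ, F ≠ 0 ∧ F.IsHomogeneous t ∧
      ∀ i, eval (v i) F = 0 := by
    by_contra! hcon
    have hcon' : ∀ t ≤ m, ¬ ∃ F : MvPolynomial (Fin 3) ℂ, F ≠ 0 ∧ F.IsHomogeneous t ∧
      ∀ i, eval (v i) F = 0 := by
      rintro t ht ⟨F, h1, h2, h3⟩
      obtain ⟨i, hi⟩ := hcon t ht F h1 h2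
      exact hi (h3 i)
    have r1 := rank_inj (hcon' m le_rfl)
    have hdm : d - m ≤ m := by omega
    have r2 := rank_inj (hcon' (d - m) hdm)
    have r3 := orth_s3 hc hrel (show m + (d - m) = d by omega)
    rcases hm with ⟨h1, h2⟩ | ⟨h1, h2⟩
    · obtain ⟨n, rfl⟩ : ∃ n, m = n + 3 := ⟨m - 3, by omega⟩
      have : d - (n + 3) = n := by omega
      rw [this] at r2 r3
      nlinarith
    · obtain ⟨n, rfl⟩ : ∃ n, m = n + 2 := ⟨m - 2, by omega⟩
      have : d - (n + 2) = n := by omega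
      rw [this] at r2 r3
      nlinarith
  set t := Nat.find hex with ht
  obtain ⟨htm, F, hF0, hF, hFv⟩ := Nat.find_spec hex
  rw [← ht] at htm hF
  have hmin : ∀ e < t, ¬ ∃ F : MvPolynomial (Fin 3) ℂ, F ≠ 0 ∧ F.IsHomogeneous e ∧
      ∀ i, eval (v i) F = 0 := fun e he h => Nat.find_min hex he ⟨by omega, h⟩
  have ht1 : 1 ≤ t := by
    by_contra h
    have h0 : t = 0 := by omega
    rw [h0] at hF
    have h1 := (totalDegree_eq_zero_iff_eq_C.1 ((totalDegree_zero_iff_isHomogeneous _).2 hF))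
    have h2 := hFv (Classical.arbitrary ι)
    rw [h1, eval_C] at h2
    rw [h2, map_zero] at h1
    exact hF0 h1
  clear_value t
  have h2t : 2 * t ≤ d + 3 := by omega
  refine ⟨t, F, ht1, h2t, hF0, hF, hFv, ?_⟩
  have r1 := rank_inj (hmin (t - 1) (by omega))
  have r3 := orth_s3 hc hrel (show (t - 1) + (d + 1 - t) = d by omega)
  obtain ⟨s, rfl⟩ : ∃ s, t = s + 1 := ⟨t - 1, by omega⟩
  simp only [Nat.add_sub_cancel] at r1 r3
  by_cases hk : d + 1 - (s + 1) < s + 1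
  · have r2 := rank_inj (hmin _ hk)
    obtain ⟨k, hk'⟩ : ∃ k, d + 1 - (s + 1) = k := ⟨_, rfl⟩
    rw [hk'] at r2 r3
    have e1 : d + 3 - (s + 1) = k + 2 := by omega
    rw [e1]
    have : k = s ∨ k + 1 = s := by omega
    rcases this with rfl | rfl <;> nlinarith
  · obtain ⟨l, hl⟩ : ∃ l, d + 1 - (s + 1) = (s + 1) + l := ⟨d + 1 - (s + 1) - (s + 1), by omega⟩
    have r2 := rank_ker (v := v) (l := l) hF0 hF (fun G hG hGv =>
      dvd_of_min hv hsep hc hrel (by omega) (by omega) hmin hF0 hF hFv hG hGv)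
    rw [hl] at r3
    have e1 : d + 3 - (s + 1) = s + 1 + l + 2 := by omega
    rw [e1]
    nlinarith

lemma exists_sep (p q : ProjPt 2) (h : p ≠ q) :
    ∃ L : MvPolynomial (Fin 3) ℂ, L.IsHomogeneous 1 ∧ eval p.rep L = 0 ∧ eval q.rep L ≠ 0 := by
  by_contra! hcon
  have key : ∀ a b : Fin 3, p.rep a * q.rep b = p.rep b * q.rep a := by
    intro a b
    have h1 := hcon (C (p.rep a) * X b - C (p.rep b) * X a)
      (((isHomogeneous_X ℂ b).C_mul _).sub ((isHomogeneous_X ℂ a).C_mul _))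
      (by simp; ring)
    simp only [map_sub, map_mul, eval_C, eval_X] at h1
    exact sub_eq_zero.1 h1
  obtain ⟨a, ha⟩ := Function.ne_iff.1 q.rep_nonzero
  simp only [Pi.zero_apply] at ha
  apply h
  rw [← p.mk_rep, ← q.mk_rep, Projectivization.mk_eq_mk_iff']
  refine ⟨p.rep a / q.rep a, ?_⟩
  ext b
  simp only [Pi.smul_apply, smul_eq_mul]
  field_simp
  rw [key a b, mul_comm]

theorem stmt_3 (s : ℕ) (Pt : Fin s → ProjPt 2) (hinj : Function.Injective Pt)
    (d : ℕ) (hd : 3 ≤ d)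
    (hcard : (s : ℤ) ≤
      max ((((d + 3) / 2 : ℕ) : ℤ) * ((d : ℤ) + 3 - (((d + 3) / 2 : ℕ) : ℤ)) - 1)
        ((((d + 3) / 2 : ℕ) : ℤ) ^ 2))
    (hcurve : ∀ t : ℕ, 1 ≤ t → 2 * t ≤ d + 3 →
      ∀ C : MvPolynomial (Fin 3) ℂ, C ≠ 0 → C.IsHomogeneous t →
        (({i : Fin s | VanishesAt C (Pt i)}).ncard : ℤ)
          ≤ (t : ℤ) * ((d : ℤ) + 3 - (t : ℤ)) - 2) :
    ∀ Q : ProjPt 2, Q ∉ Set.range Pt →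
      ∃ F : MvPolynomial (Fin 3) ℂ, F.IsHomogeneous d ∧
        (∀ i : Fin s, VanishesAt F (Pt i)) ∧ ¬ VanishesAt F Q := by
  classical
  intro Q hQ
  by_contra! hcon
  let E : (Fin 3 → ℂ) → Module.Dual ℂ (homogeneousSubmodule (Fin 3) ℂ d) := fun w =>
    (aeval (R := ℂ) w).toLinearMap ∘ₗ (Submodule.subtype _)
  have hE : ∀ w F, E w F = eval w F.1 := by intro w F; simp [E, aeval_eq_eval]
  have hmem : E Q.rep ∈ Submodule.span ℂ (Set.range fun i => E (Pt i).rep) := by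
    apply mem_span_of_iInf_ker_le_ker
    intro F hF
    rw [Submodule.mem_iInf] at hF
    rw [LinearMap.mem_ker, hE]
    refine hcon F.1 F.2 fun i => ?_
    have := hF i
    rw [LinearMap.mem_ker, hE] at this
    exact this
  obtain ⟨c, hc⟩ := (Submodule.mem_span_range_iff_exists_fun ℂ).1 hmem
  let v : Option {i // c i ≠ 0} → ProjPt 2 := fun o => o.elim Q (fun i => Pt i)
  let c' : Option {i // c i ≠ 0} → ℂ := fun o => o.elim (-1) (fun i => c i)
  have hvinj : ∀ i j, i ≠ j → v i ≠ v j := by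
    rintro (_ | i) (_ | j) hij h
    · exact hij rfl
    · exact hQ ⟨j, h.symm⟩
    · exact hQ ⟨i, h⟩
    · exact hij (congrArg some (Subtype.ext (hinj h)))
  have hrel : ∀ H : MvPolynomial (Fin 3) ℂ, H.IsHomogeneous d →
      ∑ i, c' i * eval (v i).rep H = 0 := by
    intro H hH
    rw [Fintype.sum_option]
    have h1 := LinearMap.congr_fun hc ⟨H, hH⟩
    simp only [LinearMap.coe_sum, Finset.sum_apply, LinearMap.smul_apply, hE, smul_eq_mul] at h1
    have h2 : ∑ i : {i // c i ≠ 0}, c i * eval (Pt i).rep H = ∑ i, c i * eval (Pt i).rep H := by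
      rw [← Finset.sum_subtype (Finset.univ.filter (fun i => c i ≠ 0)) (by simp)
        (fun i => c i * eval (Pt i).rep H), Finset.sum_filter]
      refine Finset.sum_congr rfl fun i _ => ?_
      split_ifs with h
      · rfl
      · rw [not_not.1 h]; ring
    change -1 * eval Q.rep H + ∑ i : {i // c i ≠ 0}, c i * eval (Pt i).rep H = 0
    rw [h2, h1]; ring
  have hcard1 : Fintype.card {i // c i ≠ 0} ≤ s := by
    simpa using Fintype.card_subtype_le (fun i => c i ≠ 0)
  have hcard2 : Fintype.card (Option {i // c i ≠ 0}) = Fintype.card {i // c i ≠ 0} + 1 :=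
    Fintype.card_option
  obtain ⟨m, hm⟩ : ∃ m, (d + 3) / 2 = m := ⟨_, rfl⟩
  rw [hm] at hcard
  have hcases : d + 3 = 2 * m ∨ d + 3 = 2 * m + 1 := by omega
  obtain ⟨t, F, ht1, ht2, hF0, hF, hFv, htc⟩ := core (v := fun i => (v i).rep) (c := c')
    (d := d) (m := m) (fun i => (v i).rep_nonzero) (fun i j hij => exists_sep _ _ (hvinj i j hij))
    (by
      rintro (_ | i)
      · exact neg_ne_zero.2 one_ne_zero
      · exact i.2) hd hrel
    (by
      rcases hcases with h | h
      · left
        refine ⟨h, ?_⟩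
        have : (d : ℤ) + 3 - m = m := by omega
        rw [this] at hcard
        have : (s : ℤ) ≤ (m : ℤ) ^ 2 := hcard.trans (max_le (by nlinarith) le_rfl)
        have : s ≤ m ^ 2 := by exact_mod_cast this
        omega
      · right
        refine ⟨h, ?_⟩
        have : (d : ℤ) + 3 - m = m + 1 := by omega
        rw [this] at hcard
        have hm1 : (1 : ℤ) ≤ m := by omega
        have : (s : ℤ) ≤ (m : ℤ) ^ 2 + m - 1 :=
          hcard.trans (max_le (by nlinarith) (by nlinarith))
        have : s + 1 ≤ m ^ 2 + m := by zify; linarith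
        omega)
  have hle := hcurve t ht1 ht2 F hF0 hF
  have hsub : Fintype.card {i // c i ≠ 0} ≤ ({i : Fin s | VanishesAt F (Pt i)}).ncard := by
    rw [← Nat.card_eq_fintype_card]
    change Set.ncard {i | c i ≠ 0} ≤ _
    exact Set.ncard_le_ncard (fun i hi => hFv (some ⟨i, hi⟩)) (Set.toFinite _)
  obtain ⟨u, hu⟩ : ∃ u, d + 3 = t + u := ⟨d + 3 - t, by omega⟩
  have e1 : d + 3 - t = u := by omega
  have e2 : (d : ℤ) + 3 - t = u := by omega
  rw [e1] at htc
  rw [e2] at hle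
  zify at htc hsub hcard2
  linarith
end
end
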